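/- arXiv:1101.5321 — 8 statements merged into one kernel-verified Lean document; each statement's English description precedes it below -/
import Mathlib

section
/- For every integer n ≥ 2, the permanent of the n×n matrix J_n − I − P equals the sum over k from 0 to n of (−1)^k · (2n/(2n−k)) · C(2n−k, k) · (n−k)! (Touchard's formula for the ménage numbers). -/
open Finset

/-- The `m × m` all-ones matrix `J_m` (integer entries). -/
def Jmat (m : ℕ) : Matrix (Fin m) (Fin m) ℤ := Matrix.of fun _ _ => 1

/-- The `m × m` permutation matrix `P` of the cycle `(1,2,...,m)`: entry `1` exactly at the
positions `(i, i+1 mod m)`, and `0` elsewhere. -/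
def Pmat (m : ℕ) : Matrix (Fin m) (Fin m) ℤ :=
  Matrix.of fun i j => if j.1 = (i.1 + 1) % m then 1 else 0

/-- The order-preserving embedding of `Fin (m-1)` into `Fin m` that skips index `a`. -/
def skipIdx {m : ℕ} (a : ℕ) (i : Fin (m - 1)) : Fin m :=
  if i.1 < a then ⟨i.1, by have := i.isLt; omega⟩ else ⟨i.1 + 1, by have := i.isLt; omega⟩

/-- The matrix obtained from the `m × m` matrix `M` by deleting row `a` and column `b`
(`0`-based indices; the paper's `M[1|r]`, deleting row `1` and column `r` in `1`-based
indexing, is `delRC M 0 (r-1)`). -/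
def delRC {m : ℕ} (M : Matrix (Fin m) (Fin m) ℤ) (a b : ℕ) :
    Matrix (Fin (m - 1)) (Fin (m - 1)) ℤ :=
  Matrix.of fun i j => M (skipIdx a i) (skipIdx b j)

/-- `rookNum M j` is the number of ways to place `j` non-attacking rooks on the `1`-entries
of the matrix `M`: the number of `j`-element sets of positions carrying entry `1`, no two of
which share a row or a column.  In particular `rookNum M 0 = 1`. -/
def rookNum {α β : Type*} [Fintype α] [Fintype β] [DecidableEq α] [DecidableEq β]
    (M : Matrix α β ℤ) (j : ℕ) : ℕ :=
  ((Finset.powersetCard j (Finset.univ : Finset (α × β))).filter fun S =>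
    ∀ p ∈ S, M p.1 p.2 = 1 ∧ ∀ q ∈ S, p ≠ q → p.1 ≠ q.1 ∧ p.2 ≠ q.2).card

/-- The binomial coefficient `C(a,b)` for integer arguments, with the convention that it
vanishes unless `0 ≤ b ≤ a`. -/
def intChoose (a b : ℤ) : ℤ :=
  if 0 ≤ b ∧ b ≤ a then (a.toNat.choose b.toNat : ℤ) else 0


lemma menage_path {ι R : Type*} [Fintype ι] [DecidableEq ι] [CommRing R] (T : Matrix ι ι R) (n : ℕ)
    (h : ι → ι → R) :
    ∑ t : Fin (n+1) → ι, (∏ i : Fin n, T (t i.castSucc) (t i.succ)) * h (t 0) (t (Fin.last n))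
      = ∑ a, ∑ b, (T ^ n) a b * h a b := by
  induction n generalizing h with
  | zero =>
    rw [← (Equiv.funUnique (Fin 1) ι).symm.sum_comp]
    simp [Matrix.one_apply]
  | succ n ih =>
    rw [← (Fin.consEquiv (fun _ => ι)).sum_comp, Fintype.sum_prod_type]
    refine Finset.sum_congr rfl fun a _ => ?_
    have := ih (fun c b => T a c * h a b)
    simp only [Fin.consEquiv_apply, Fin.prod_univ_succ, Fin.castSucc_zero, Fin.cons_zero, Fin.cons_succ, ← Fin.succ_castSucc, ← Fin.succ_last]
    calc _ = _ := Finset.sum_congr rfl fun t _ => by ring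
      _ = _ := this
      _ = _ := by
        rw [Finset.sum_comm]
        refine Finset.sum_congr rfl fun b _ => ?_
        rw [pow_succ', Matrix.mul_apply, Finset.sum_mul]
        exact Finset.sum_congr rfl fun c _ => by ring

lemma menage_cyc {ι R : Type*} [Fintype ι] [DecidableEq ι] [CommRing R] (T : Matrix ι ι R) (n : ℕ) :
    ∑ t : Fin (n+1) → ι, (∏ i : Fin (n+1), T (t i) (t (i+1))) = (T ^ (n+1)).trace := by
  have := menage_path T n (fun a b => T b a)
  calc _ = _ := Finset.sum_congr rfl fun t _ => by
              rw [Fin.prod_univ_castSucc]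
              simp only [Fin.last_add_one, Fin.coeSucc_eq_succ]
    _ = _ := this
    _ = _ := by
      rw [pow_succ]
      simp [Matrix.trace, Matrix.mul_apply]

lemma menage_card {α : Type*} [Fintype α] [DecidableEq α] (S : Finset α) (g : α → α) :
    (univ.filter fun σ : Equiv.Perm α => ∀ i ∈ S, σ i = g i).card
      = if Set.InjOn g S then (Fintype.card α - S.card).factorial else 0 := by
  split_ifs with h
  · obtain ⟨τ, hτ⟩ : ∃ τ : Equiv.Perm α, ∀ i ∈ S, τ i = g i := by
      obtain ⟨τ, hτ⟩ := Finset.exists_equiv_extend_of_card_eq (t := univ) (s := S) (f := g) (by simp) (by simp) h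
      refine ⟨τ.trans (Equiv.subtypeUnivEquiv (by simp)), fun i hi => ?_⟩
      simpa using hτ i hi
    have e : {σ : Equiv.Perm α // ∀ i ∈ S, σ i = g i} ≃ {σ : Equiv.Perm α // ∀ i, ¬ (i ∉ S) → σ i = i} :=
      (Equiv.mulLeft τ⁻¹).subtypeEquiv (by
        intro σ
        simp only [not_not, Equiv.coe_mulLeft, Equiv.Perm.mul_apply]
        refine forall₂_congr fun i hi => ?_
        rw [Equiv.Perm.inv_eq_iff_eq, hτ i hi])
    rw [← Fintype.card_subtype, Fintype.card_congr e,
      Fintype.card_congr (Equiv.Perm.subtypeEquivSubtypePerm (fun i => i ∉ S)).symm, Fintype.card_perm]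
    congr 1
    rw [Fintype.card_subtype_compl]; simp
  · rw [Finset.card_eq_zero, Finset.filter_eq_empty_iff]
    intro σ _ hσ
    apply h
    intro i hi j hj hij
    apply σ.injective
    rw [hσ i hi, hσ j hj, hij]

open Polynomial in
noncomputable def menageF : ℕ → ℤ[X]
  | 0 => 1
  | 1 => 1
  | m+2 => menageF (m+1) + X * menageF m

open Polynomial in
lemma menageF_coeff (m k : ℕ) : (menageF m).coeff k = ((m - k).choose k : ℕ) := by
  induction m using Nat.strong_induction_on generalizing k with
  | _ m ih =>
    match m with
    | 0 => cases k <;> simp [menageF, coeff_one]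
    | 1 => rcases k with _ | _ | k <;> simp [menageF, coeff_one]
    | m+2 =>
      rw [menageF, coeff_add, ih (m+1) (by omega)]
      cases k with
      | zero => simp
      | succ k =>
        rw [coeff_X_mul, ih m (by omega)]
        by_cases hk : k ≤ m
        · rw [show m + 2 - (k+1) = (m-k)+1 by omega, show m + 1 - (k+1) = m-k by omega,
            Nat.choose_succ_succ]
          push_cast; ring
        · have h1 : m + 2 - (k+1) = 0 := by omega
          have h2 : m + 1 - (k+1) = 0 := by omega
          have h3 : m - k = 0 := by omega
          rw [h1, h2, h3]
          obtain ⟨j, rfl⟩ : ∃ j, k = j+1 := ⟨k-1, by omega⟩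
          simp

open Polynomial in
noncomputable def menageT : Matrix (Fin 3) (Fin 3) ℤ[X] :=
  Matrix.of fun a b => (if a = 0 then 1 else X) * (if a = 1 ∧ b = 2 then 0 else 1)

open Polynomial in
lemma menageT_trace (n : ℕ) : (menageT ^ (n+1)).trace = menageF (2*n+2) + X * menageF (2*n) := by
  have hT : menageT = !![1,1,1;X,X,0;X,X,X] := by
    ext1 i j; fin_cases i <;> fin_cases j <;> simp [menageT]
  have h3 : menageT ^ 3 = (1 + 2 * X : ℤ[X]) • menageT ^ 2 - (X^2 : ℤ[X]) • menageT := by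
    rw [pow_succ, pow_two, hT]
    ext1 i j; fin_cases i <;> fin_cases j <;> simp [Matrix.mul_apply, Fin.sum_univ_three] <;> ring
  induction n using Nat.strong_induction_on with
  | _ n ih =>
    match n with
    | 0 => simp [hT, Matrix.trace_fin_three, menageF]; try ring
    | 1 => 
      rw [pow_two, hT]
      simp [Matrix.trace_fin_three, Matrix.mul_apply, Fin.sum_univ_three, menageF]; ring
    | n+2 =>
      have : menageT ^ (n+2+1) = (1 + 2 * X : ℤ[X]) • menageT ^ (n+1+1) - (X^2 : ℤ[X]) • menageT ^ (n+1) := by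
        rw [show n+2+1 = n + 3 by ring, pow_add, h3, mul_sub, mul_smul_comm, mul_smul_comm, ← pow_add, ← pow_succ]
      rw [this, Matrix.trace_sub, Matrix.trace_smul, Matrix.trace_smul, ih _ (by omega), ih _ (by omega)]
      simp only [mul_add, mul_one, Nat.reduceMul, menageF, smul_eq_mul]
      ring

/-- Target value prescribed by the letter `a` at position `i`. -/
def menageG {m : ℕ} (t : Fin (m+2) → Fin 3) (i : Fin (m+2)) : Fin (m+2) :=
  if t i = 1 then i else i - 1

lemma menage_entry (m : ℕ) (r i : Fin (m+2)) :
    (Jmat (m+2) - 1 - Pmat (m+2)) r i = ∑ a : Fin 3, (if a = 0 then (1:ℤ) else -1) *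
      (if a ≠ 0 → r = (if a = 1 then i else i - 1) then 1 else 0) := by
  have h : (i.1 = (r.1 + 1) % (m+2)) ↔ r = i - 1 := by
    rw [eq_sub_iff_add_eq, Fin.ext_iff, Fin.val_add]
    simp [eq_comm]
  simp only [Fin.sum_univ_three, Jmat, Pmat, Matrix.sub_apply, Matrix.of_apply, Matrix.one_apply, h]
  simp
  split_ifs <;> ring

lemma menage_injOn {m : ℕ} (t : Fin (m+2) → Fin 3) :
    Set.InjOn (menageG t) (univ.filter fun i => t i ≠ 0 : Finset (Fin (m+2))) ↔
      ∀ i, ¬ (t i = 1 ∧ t (i+1) = 2) := by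
  constructor
  · rintro h i ⟨h1, h2⟩
    have := @h i (by simp [h1]) (i+1) (by simp [h2]) (by simp [menageG, h1, h2])
    simp at this
  · intro h i hi j hj hij
    have key : ∀ i j : Fin (m+2), t i = 1 → t j ≠ 0 → t j ≠ 1 → i = j - 1 → False := by
      intro i j h1 h2 h3 h4
      apply h i
      refine ⟨h1, ?_⟩
      rw [h4, sub_add_cancel]
      generalize t j = x at *
      revert h2 h3; revert x; decide
    simp only [coe_filter, mem_univ, true_and, Set.mem_ofPred_eq] at hi hj
    unfold menageG at hij
    split_ifs at hij with h1 h2 h2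
    · exact hij
    · exact (key i j h1 hj h2 hij).elim
    · exact (key j i h2 hi h1 hij.symm).elim
    · exact sub_left_injective hij

lemma menage_perm (m : ℕ) :
    (Jmat (m+2) - 1 - Pmat (m+2)).permanent = ∑ t : Fin (m+2) → Fin 3,
      (-1) ^ (univ.filter fun i => t i ≠ 0).card *
      (if ∀ i, ¬ (t i = 1 ∧ t (i+1) = 2) then
        ((m + 2 - (univ.filter fun i => t i ≠ 0).card).factorial : ℤ) else 0) := by
  simp only [Matrix.permanent, menage_entry, Finset.prod_univ_sum, Fintype.piFinset_univ]
  rw [Finset.sum_comm]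
  refine Finset.sum_congr rfl fun t _ => ?_
  have hc := menage_card (univ.filter fun i => t i ≠ 0) (menageG t)
  simp only [menage_injOn, Fintype.card_fin] at hc
  have hs : (∏ i, if t i = 0 then (1:ℤ) else -1) = (-1) ^ (univ.filter fun i => t i ≠ 0).card := by
    rw [Finset.prod_ite]; simp
  simp only [Finset.prod_mul_distrib, hs, ← Finset.mul_sum]
  congr 1
  rw [← Nat.cast_zero, ← Nat.cast_ite, ← hc, Finset.card_filter, Nat.cast_sum]
  refine Finset.sum_congr rfl fun σ _ => ?_
  rw [Nat.cast_zero, Finset.prod_boole]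
  simp [menageG]

open Polynomial in
lemma menage_poly (m : ℕ) :
    ∑ t : Fin (m+2) → Fin 3, (if ∀ i, ¬ (t i = 1 ∧ t (i+1) = 2) then
      (X : ℤ[X]) ^ (univ.filter fun i => t i ≠ 0).card else 0) =
    menageF (2*m+4) + X * menageF (2*m+2) := by
  have h := menageT_trace (m+1)
  rw [← menage_cyc] at h
  rw [show 2*m+4 = 2*(m+1)+2 by ring, show 2*m+2 = 2*(m+1) by ring, ← h]
  refine Finset.sum_congr rfl fun t _ => ?_
  simp only [menageT, Matrix.of_apply, Finset.prod_mul_distrib]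
  have hs : (∏ i, if t i = 0 then (1:ℤ[X]) else X) = X ^ (univ.filter fun i => t i ≠ 0).card := by
    rw [Finset.prod_ite]; simp
  rw [hs]
  have h2 : (∏ i, if t i = 1 ∧ t (i+1) = 2 then (0:ℤ[X]) else 1) =
      if ∀ i, ¬ (t i = 1 ∧ t (i+1) = 2) then 1 else 0 := by
    have := Finset.prod_boole (s := univ) (p := fun i => ¬ (t i = 1 ∧ t (i+1) = 2)) (M₀ := ℤ[X])
    simp only [mem_univ, forall_true_left] at this
    rw [← this]
    exact Finset.prod_congr rfl fun i _ => by rw [ite_not]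
  rw [h2]; simp

lemma menage_int (m : ℕ) :
    (Jmat (m+2) - 1 - Pmat (m+2)).permanent = ∑ k ∈ Finset.range (m+2+1),
      (menageF (2*m+4) + Polynomial.X * menageF (2*m+2)).coeff k *
        ((-1) ^ k * ((m+2-k).factorial : ℤ)) := by
  rw [menage_perm, ← menage_poly]
  simp only [Polynomial.finsetSum_coeff, Finset.sum_mul]
  rw [Finset.sum_comm]
  refine Finset.sum_congr rfl fun t _ => ?_
  split_ifs with h
  · have hc : (univ.filter fun i => t i ≠ 0).card < m+2+1 := by
      have := Finset.card_le_univ (univ.filter fun i => t i ≠ 0)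
      simp only [Fintype.card_fin] at this
      omega
    simp only [Polynomial.coeff_X_pow, ite_mul, one_mul, zero_mul]
    rw [Finset.sum_ite_eq' , if_pos (Finset.mem_range.2 hc)]
  · simp

/-- **Touchard's formula.**  For every `n ≥ 2`, the permanent of `J_n - I - P` equals
`∑_{k=0}^{n} (-1)^k · (2n/(2n-k)) · C(2n-k, k) · (n-k)!`. -/
theorem touchard_menage (n : ℕ) (hn : 2 ≤ n) :
    ((Jmat n - 1 - Pmat n).permanent : ℚ) =
      ∑ k ∈ Finset.range (n + 1),
        (-1 : ℚ) ^ k * (2 * n / (2 * (n : ℚ) - (k : ℚ))) *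
          (Nat.choose (2 * n - k) k : ℚ) * (Nat.factorial (n - k) : ℚ) := by
  obtain ⟨m, rfl⟩ : ∃ m, n = m + 2 := ⟨n - 2, by omega⟩
  rw [menage_int]
  push_cast
  refine Finset.sum_congr rfl fun k hk => ?_
  rw [Finset.mem_range] at hk
  suffices h : ((menageF (2*m+4) + Polynomial.X * menageF (2*m+2)).coeff k : ℚ) =
      2 * ((m:ℚ) + 2) / (2 * ((m:ℚ) + 2) - k) * (Nat.choose (2 * (m+2) - k) k : ℚ) by
    rw [h]; ring
  have hne : (2 * ((m:ℚ) + 2) - k) ≠ 0 := by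
    have : (k:ℚ) < m + 2 + 1 := by exact_mod_cast hk
    have : (0:ℚ) ≤ m := by positivity
    intro h; linarith
  rw [Polynomial.coeff_add, menageF_coeff, show 2 * (m+2) = 2*m+4 by ring]
  cases k with
  | zero =>
    simp
    field_simp
  | succ j =>
    rw [Polynomial.coeff_X_mul, menageF_coeff]
    obtain ⟨N, hN⟩ : ∃ N, 2 * m + 2 - j = N := ⟨_, rfl⟩
    have h1 : 2 * m + 4 - (j+1) = N + 1 := by omega
    have hq : (2 * ((m:ℚ) + 2) - ((j+1 : ℕ) : ℚ)) = N + 1 := by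
      have : 2 * m + 4 = N + 1 + (j + 1) := by omega
      have : (2 * m + 4 : ℚ) = N + 1 + (j + 1) := by exact_mod_cast this
      push_cast; linarith
    have hc : ((N:ℚ) + 1) * N.choose j = (N+1).choose (j+1) * (j+1) := by
      exact_mod_cast Nat.add_one_mul_choose_eq N j
    have h2 : 2 * ((m:ℚ) + 2) = N + 1 + (j+1) := by push_cast at hq; linarith
    rw [hq] at hne
    rw [hq, h1, hN, h2]
    push_cast
    field_simp
    linear_combination hc
end

section
/- Let H_n = per(J_n − I − P). Then H_2 = 0, H_3 = 1, and for every integer n ≥ 4 one has the Cayley recursion (n−2)·H_n = n(n−2)·H_{n−1} + n·H_{n−2} + 4·(−1)^{n+1}. -/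
open Finset

open Polynomial in
/-- First-kind Chebyshev-like sequence. -/
noncomputable def cayR : ℕ → ℤ[X]
  | 0 => 2
  | 1 => X - 2
  | n + 2 => (X - 2) * cayR (n + 1) - cayR n

open Polynomial in
/-- Second-kind Chebyshev-like sequence. -/
noncomputable def cayS : ℕ → ℤ[X]
  | 0 => 1
  | 1 => X - 2
  | n + 2 => (X - 2) * cayS (n + 1) - cayS n

theorem cayR_eq (n : ℕ) : cayR (n + 2) = cayS (n + 2) - cayS n := by
  induction n using Nat.twoStepInduction with
  | zero => simp [cayR, cayS]; ring
  | one => simp [cayR, cayS]; ring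
  | more n h1 h2 =>
    have e1 : cayR (n + 4) = (Polynomial.X - 2) * cayR (n + 3) - cayR (n + 2) := by rw [cayR]
    have e2 : cayS (n + 4) = (Polynomial.X - 2) * cayS (n + 3) - cayS (n + 2) := by rw [cayS]
    have e3 : cayS (n + 2) = (Polynomial.X - 2) * cayS (n + 1) - cayS (n) := by rw [cayS]
    have h2' : cayR (n + 3) = cayS (n + 3) - cayS (n + 1) := h2
    change cayR (n + 4) = cayS (n + 4) - cayS (n + 2)
    linear_combination e1 - e2 + (Polynomial.X - 2) * h2' - h1 + e3

theorem cayR_deriv (n : ℕ) :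
    Polynomial.derivative (cayR (n + 1)) = ((n : Polynomial ℤ) + 1) * cayS n := by
  induction n using Nat.twoStepInduction with
  | zero => simp [cayR, cayS]
  | one => simp [cayR, cayS]; ring
  | more n h1 h2 =>
    have e1 : cayR (n + 3) = (Polynomial.X - 2) * cayR (n + 2) - cayR (n + 1) := by rw [cayR]
    have e2 : cayS (n + 2) = (Polynomial.X - 2) * cayS (n + 1) - cayS n := by rw [cayS]
    have h2' : Polynomial.derivative (cayR (n + 2)) = ((n : Polynomial ℤ) + 1 + 1) * cayS (n + 1) := by
      have := h2; push_cast at this; exact this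
    change Polynomial.derivative (cayR (n + 3)) = _
    rw [e1]
    simp only [Polynomial.derivative_sub, Polynomial.derivative_mul, Polynomial.derivative_X,
      Polynomial.derivative_ofNat, h1, h2']
    push_cast
    linear_combination cayR_eq n - ((n : Polynomial ℤ) + 2) * e2

theorem cayR_eval (n : ℕ) : (cayR n).eval 0 = 2 * (-1) ^ n := by
  induction n using Nat.twoStepInduction with
  | zero => simp [cayR]
  | one => simp [cayR]
  | more n h1 h2 =>
    rw [cayR]
    simp only [Polynomial.eval_sub, Polynomial.eval_mul, Polynomial.eval_X,
      Polynomial.eval_ofNat, h1, h2]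
    ring

/-- The functional sending `X ^ k` to `k!`. -/
noncomputable def cayL : Polynomial ℤ →ₗ[ℤ] ℤ :=
  Polynomial.lsum fun k => (k.factorial : ℤ) • LinearMap.id

theorem cayL_monomial (k : ℕ) (a : ℤ) :
    cayL (Polynomial.monomial k a) = k.factorial * a := by
  simp [cayL, Polynomial.lsum_apply, Polynomial.sum_monomial_index]

theorem cayL_deriv (p : Polynomial ℤ) :
    cayL (Polynomial.derivative p) = cayL p - p.eval 0 := by
  induction p using Polynomial.induction_on' with
  | add p q hp hq => simp only [map_add, Polynomial.eval_add, hp, hq]; ring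
  | monomial n a =>
    rw [Polynomial.derivative_monomial, cayL_monomial, cayL_monomial]
    cases n with
    | zero => simp
    | succ n => simp [Nat.factorial_succ]; ring

theorem cayL_S (n : ℕ) :
    ((n : ℤ) + 1) * cayL (cayS n) = cayL (cayR (n + 1)) - 2 * (-1) ^ (n + 1) := by
  rw [← cayR_eval, ← cayL_deriv, cayR_deriv]
  have : ((n : Polynomial ℤ) + 1) * cayS n = ((n : ℤ) + 1) • cayS n := by
    rw [zsmul_eq_mul]; push_cast; rfl
  rw [this, map_smul, smul_eq_mul]

theorem cayL_rec (n : ℕ) :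
    ((n : ℤ) + 2) * cayL (cayR (n + 4)) =
      ((n : ℤ) + 4) * (n + 2) * cayL (cayR (n + 3)) + ((n : ℤ) + 4) * cayL (cayR (n + 2))
        + 4 * (-1) ^ (n + 5) := by
  have a := cayL_S (n + 3)
  have b := cayL_S (n + 1)
  have c : cayL (cayR (n + 3)) = cayL (cayS (n + 3)) - cayL (cayS (n + 1)) := by
    rw [← map_sub]; exact congrArg _ (cayR_eq (n + 1))
  push_cast at a b
  rw [c]
  linear_combination (-(n : ℤ) - 2) * a + ((n : ℤ) + 4) * b

theorem cay_path {ι R : Type*} [Fintype ι] [DecidableEq ι] [CommRing R] (T : Matrix ι ι R)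
    (m : ℕ) (g : ι → ι → R) :
    ∑ c : Fin (m + 1) → ι, g (c 0) (c (Fin.last m)) * ∏ i : Fin m, T (c i.castSucc) (c i.succ)
      = ∑ a, ∑ b, g a b * (T ^ m) a b := by
  induction m generalizing g with
  | zero =>
    rw [← (Equiv.funUnique (Fin 1) ι).symm.sum_comp]
    simp [Matrix.one_apply]
  | succ m ih =>
    rw [← (Fin.consEquiv (fun _ => ι)).sum_comp, Fintype.sum_prod_type, Finset.sum_comm]
    have := ih (fun x y => ∑ a, g a y * T a x)
    calc _ = ∑ c : Fin (m + 1) → ι, (∑ a, g a (c (Fin.last m)) * T a (c 0)) *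
              ∏ i : Fin m, T (c i.castSucc) (c i.succ) := by
          refine Finset.sum_congr rfl fun c _ => ?_
          rw [Finset.sum_mul]
          refine Finset.sum_congr rfl fun a _ => ?_
          rw [Fin.prod_univ_succ]
          simp [Fin.consEquiv, ← Fin.succ_last, ← Fin.succ_castSucc, mul_assoc]
      _ = _ := this
      _ = _ := by
          simp only [pow_succ', Matrix.mul_apply, Finset.mul_sum, Finset.sum_mul]
          rw [Finset.sum_congr rfl fun x _ => Finset.sum_comm, Finset.sum_comm]
          refine Finset.sum_congr rfl fun a _ => ?_
          rw [Finset.sum_comm]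
          refine Finset.sum_congr rfl fun b _ => Finset.sum_congr rfl fun c _ => ?_
          ring

theorem cay_trace {ι R : Type*} [Fintype ι] [DecidableEq ι] [CommRing R] (T : Matrix ι ι R)
    (m : ℕ) :
    ∑ c : Fin (m + 1) → ι, ∏ i, T (c i) (c (i + 1)) = (T ^ (m + 1)).trace := by
  have := cay_path T m (fun a b => T b a)
  rw [pow_succ', Matrix.trace]
  simp only [Matrix.diag, Matrix.mul_apply]
  rw [Finset.sum_comm, ← this]
  refine Finset.sum_congr rfl fun c _ => ?_
  rw [Fin.prod_univ_castSucc, mul_comm]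
  simp

/-- Row weights. -/
noncomputable def cayW : Fin 3 → Polynomial ℤ := ![Polynomial.X, -1, -1]

/-- Transfer matrix. -/
noncomputable def cayT : Matrix (Fin 3) (Fin 3) (Polynomial ℤ) :=
  Matrix.of fun a b => if a = 2 ∧ b = 1 then 0 else cayW a

theorem cayT_eq : cayT = !![Polynomial.X, Polynomial.X, Polynomial.X; -1, -1, -1; -1, 0, -1] := by
  ext1 i j
  fin_cases i <;> fin_cases j <;> simp [cayT, cayW]

theorem cayT_cube : cayT ^ 3 = (Polynomial.X - 2 : Polynomial ℤ) • cayT ^ 2 - cayT := by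
  rw [cayT_eq, pow_succ, pow_two]
  ext1 i j
  fin_cases i <;> fin_cases j <;> simp [Matrix.mul_apply, Fin.sum_univ_three] <;> ring

theorem cayT_trace (m : ℕ) : (cayT ^ (m + 1)).trace = cayR (m + 1) := by
  induction m using Nat.twoStepInduction with
  | zero => simp [cayT_eq, Matrix.trace, Fin.sum_univ_three, cayR]; ring
  | one =>
    simp [cayT_eq, Matrix.trace, Fin.sum_univ_three, cayR, pow_two, Matrix.mul_apply]; ring
  | more m h1 h2 =>
    have : cayT ^ (m + 3) = (Polynomial.X - 2 : Polynomial ℤ) • cayT ^ (m + 2) - cayT ^ (m + 1) := by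
      rw [pow_add, cayT_cube, mul_sub, Matrix.mul_smul, ← pow_add, ← pow_succ]
    change (cayT ^ (m + 3)).trace = _
    rw [this, Matrix.trace_sub, Matrix.trace_smul, h1, h2, smul_eq_mul]
    exact (cayR.eq_3 (m + 1)).symm

theorem cay_card {α : Type*} [Fintype α] [DecidableEq α] (S : Finset α) (f : α → α)
    (hf : Set.InjOn f S) :
    (Finset.univ.filter fun σ : Equiv.Perm α => ∀ i ∈ S, σ i = f i).card =
      (Fintype.card α - S.card).factorial := by
  obtain ⟨g, hg⟩ := Finset.exists_equiv_extend_of_card_eq (t := (Finset.univ : Finset α))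
    (by simp) (Finset.subset_univ _) hf
  let τ : Equiv.Perm α := g.trans (Equiv.subtypeUnivEquiv (by simp))
  have hτ : ∀ i ∈ S, τ i = f i := hg
  have e := Fintype.card_congr (Equiv.Perm.subtypeEquivSubtypePerm (fun a : α => a ∉ S))
  rw [Fintype.card_perm, Fintype.card_subtype_compl, Fintype.card_coe] at e
  rw [e, Fintype.card_subtype]
  refine Finset.card_bij (fun σ _ => τ⁻¹ * σ) ?_ ?_ ?_
  · intro σ hσ
    simp only [Finset.mem_filter, Finset.mem_univ, true_and, not_not] at hσ ⊢
    intro a ha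
    rw [Equiv.Perm.mul_apply, hσ a ha, ← hτ a ha]; simp
  · intro a _ b _ h
    exact mul_left_cancel h
  · intro σ hσ
    simp only [Finset.mem_filter, Finset.mem_univ, true_and, not_not] at hσ ⊢
    refine ⟨τ * σ, ?_, by simp⟩
    intro a ha
    rw [Equiv.Perm.mul_apply, hσ a ha, hτ a ha]

/-- The column picked by a row. -/
def cayP {m : ℕ} (i : Fin (m + 2)) (c : Fin 3) : Fin (m + 2) := if c = 2 then i + 1 else i

/-- Entry weights. -/
def cayV {m : ℕ} (c : Fin 3) (i j : Fin (m + 2)) : ℤ :=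
  if c = 0 then 1 else if j = cayP i c then -1 else 0

theorem cay_entry {m : ℕ} (i j : Fin (m + 2)) :
    (Jmat (m + 2) - 1 - Pmat (m + 2)) i j = ∑ c, cayV c i j := by
  have h : (j.1 = (i.1 + 1) % (m + 2)) ↔ j = i + 1 := by
    rw [Fin.ext_iff, Fin.val_add]; simp
  simp only [Jmat, Pmat, Matrix.sub_apply, Matrix.of_apply, Matrix.one_apply, h,
    Fin.sum_univ_three, cayV, cayP]
  simp only [eq_comm (a := i) (b := j)]
  by_cases h1 : j = i <;> by_cases h2 : j = i + 1 <;> simp [h1, h2] <;> grind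

theorem cay_inj {m : ℕ} (c : Fin (m + 2) → Fin 3) :
    Set.InjOn (fun i => cayP i (c i)) ((Finset.univ.filter fun i => c i ≠ 0 : Finset _) : Set (Fin (m + 2)))
      ↔ ∀ i, ¬ (c i = 2 ∧ c (i + 1) = 1) := by
  have key : ∀ x : Fin 3, x ≠ 0 → x = 1 ∨ x = 2 := by decide
  constructor
  · rintro h i ⟨h1, h2⟩
    have := @h i (by simp [h1]) (i + 1) (by simp [h2]) (by simp [cayP, h1, h2])
    simp at this
  · intro h i hi j hj hij
    simp only [Finset.coe_filter, Finset.mem_univ, true_and, Set.mem_setOf_eq] at hi hj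
    rcases key _ hi with hi | hi <;> rcases key _ hj with hj | hj <;>
      simp [cayP, hi, hj] at hij
    · exact hij
    · subst hij; exact absurd ⟨hj, hi⟩ (h j)
    · subst hij; exact absurd ⟨hi, hj⟩ (h i)
    · exact hij

theorem cay_word {m : ℕ} (c : Fin (m + 2) → Fin 3) :
    ∑ σ : Equiv.Perm (Fin (m + 2)), ∏ i, cayV (c i) i (σ i) =
      cayL (∏ i, cayT (c i) (c (i + 1))) := by
  set S : Finset (Fin (m + 2)) := Finset.univ.filter fun i => c i ≠ 0 with hS
  have key : ∀ x : Fin 3, x ≠ 0 → x = 1 ∨ x = 2 := by decide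
  have h1 : ∀ σ : Equiv.Perm (Fin (m + 2)), ∏ i, cayV (c i) i (σ i) =
      if (∀ i ∈ S, σ i = cayP i (c i)) then (-1) ^ S.card else 0 := by
    intro σ
    have : ∏ i, cayV (c i) i (σ i) = ∏ i ∈ S, if σ i = cayP i (c i) then (-1 : ℤ) else 0 := by
      rw [hS, Finset.prod_filter]
      refine Finset.prod_congr rfl fun i _ => ?_
      by_cases h : c i = 0 <;> simp [cayV, h]
    rw [this]
    split_ifs with h
    · rw [Finset.prod_congr rfl fun i hi => if_pos (h i hi), Finset.prod_const]
    · push Not at h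
      obtain ⟨i, hi, hne⟩ := h
      exact Finset.prod_eq_zero hi (if_neg hne)
  simp only [h1]
  rw [← Finset.sum_filter, Finset.sum_const]
  by_cases hok : ∀ i, ¬ (c i = 2 ∧ c (i + 1) = 1)
  · have hc := cay_card S (fun i => cayP i (c i)) ((cay_inj c).2 hok)
    beta_reduce at hc
    have : ∏ i, cayT (c i) (c (i + 1)) =
        Polynomial.monomial (Fintype.card (Fin (m + 2)) - S.card) ((-1 : ℤ) ^ S.card) := by
      have e : ∀ i, cayT (c i) (c (i + 1)) = if c i ≠ 0 then (-1) else Polynomial.X := by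
        intro i
        have := hok i
        simp only [cayT, Matrix.of_apply, if_neg this]
        by_cases h : c i = 0
        · simp [h, cayW]
        · rcases key _ h with h | h <;> simp [h, cayW]
      rw [Finset.prod_congr rfl fun i _ => e i, Finset.prod_ite, Finset.prod_const,
        Finset.prod_const, ← hS, ← Finset.card_compl, ← Polynomial.C_mul_X_pow_eq_monomial]
      simp [hS, Finset.compl_filter]
    rw [this, cayL_monomial, nsmul_eq_mul]
    congr 2
    convert hc
  · have : ∏ i, cayT (c i) (c (i + 1)) = 0 := by
      push Not at hok
      obtain ⟨i, hi⟩ := hok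
      exact Finset.prod_eq_zero (Finset.mem_univ i) (by simp [cayT, hi])
    rw [this, map_zero, Finset.card_eq_zero.2, zero_smul]
    rw [Finset.filter_eq_empty_iff]
    intro σ _ hσ
    apply hok
    rw [← cay_inj]
    intro i hi j hj hij
    have a := hσ i (by simpa [hS] using hi)
    have b := hσ j (by simpa [hS] using hj)
    exact σ.injective (a.trans (hij.trans b.symm))

theorem cay_per (m : ℕ) :
    (Jmat (m + 2) - 1 - Pmat (m + 2)).permanent = cayL (cayR (m + 2)) := by
  rw [← Matrix.permanent_transpose, Matrix.permanent]
  simp only [Matrix.transpose_apply, cay_entry]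
  simp only [Fintype.prod_sum]
  rw [Finset.sum_comm, ← cayT_trace, ← cay_trace, map_sum]
  exact Finset.sum_congr rfl fun c _ => cay_word c

theorem cayL_R2 : cayL (cayR 2) = 0 := by
  have : cayR 2 = Polynomial.monomial 2 1 + Polynomial.monomial 1 (-4) + Polynomial.monomial 0 2 := by
    simp [cayR, ← Polynomial.C_mul_X_pow_eq_monomial]; ring
  rw [this]; simp only [map_add, cayL_monomial]; norm_num [Nat.factorial]

theorem cayL_R3 : cayL (cayR 3) = 1 := by
  have : cayR 3 = Polynomial.monomial 3 1 + Polynomial.monomial 2 (-6) + Polynomial.monomial 1 9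
      + Polynomial.monomial 0 (-2) := by
    simp [cayR, ← Polynomial.C_mul_X_pow_eq_monomial]; ring
  rw [this]; simp only [map_add, cayL_monomial]; norm_num [Nat.factorial]

/-- **Cayley's recursion.**  With `H_n = per(J_n - I - P)` one has `H_2 = 0`, `H_3 = 1`, and
`(n-2)·H_n = n(n-2)·H_{n-1} + n·H_{n-2} + 4·(-1)^{n+1}` for every `n ≥ 4`. -/
theorem cayley_recursion :
    (Jmat 2 - 1 - Pmat 2).permanent = 0 ∧
    (Jmat 3 - 1 - Pmat 3).permanent = 1 ∧
    ∀ n : ℕ, 4 ≤ n →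
      ((n : ℤ) - 2) * (Jmat n - 1 - Pmat n).permanent =
        (n : ℤ) * ((n : ℤ) - 2) * (Jmat (n - 1) - 1 - Pmat (n - 1)).permanent +
          (n : ℤ) * (Jmat (n - 2) - 1 - Pmat (n - 2)).permanent + 4 * (-1 : ℤ) ^ (n + 1) := by
  refine ⟨(cay_per 0).trans cayL_R2, (cay_per 1).trans cayL_R3, ?_⟩
  intro n hn
  obtain ⟨k, rfl⟩ := Nat.exists_eq_add_of_le' hn
  have h := cayL_rec k
  have a := cay_per (k + 2)
  have b := cay_per (k + 1)
  have c := cay_per k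
  rw [← a, ← b, ← c] at h
  change ((k + 4 : ℕ) - 2 : ℤ) * (Jmat (k + 4) - 1 - Pmat (k + 4)).permanent =
    ((k + 4 : ℕ) : ℤ) * (((k + 4 : ℕ) : ℤ) - 2) * (Jmat (k + 3) - 1 - Pmat (k + 3)).permanent +
      ((k + 4 : ℕ) : ℤ) * (Jmat (k + 2) - 1 - Pmat (k + 2)).permanent + 4 * (-1 : ℤ) ^ (k + 5)
  push_cast
  linear_combination h
end

section
/- Let M be an n×n matrix with all entries 0 or 1. Then per(J_n − M) = Σ_{j=0}^{n} (−1)^j · ν_j(M) · (n−j)!. -/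
open Finset

/-- Number of permutations extending a non-attacking rook placement. -/
lemma card_perm_extending (n : ℕ) (S : Finset (Fin n × Fin n))
    (hS : ∀ p ∈ S, ∀ q ∈ S, p ≠ q → p.1 ≠ q.1 ∧ p.2 ≠ q.2) :
    ((Finset.univ : Finset (Equiv.Perm (Fin n))).filter
      fun σ => ∀ p ∈ S, σ p.2 = p.1).card = Nat.factorial (n - S.card) := by
  classical
  have hg : Function.Injective (fun p : S => p.1.1) := by
    intro p q h
    by_contra hne
    exact (hS p.1 p.2 q.1 q.2 (fun h' => hne (Subtype.ext h'))).1 h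
  have hf : Function.Injective (fun p : S => p.1.2) := by
    intro p q h
    by_contra hne
    exact (hS p.1 p.2 q.1 q.2 (fun h' => hne (Subtype.ext h'))).2 h
  obtain ⟨τ, hτ⟩ : ∃ τ : Equiv.Perm (Fin n), ∀ p ∈ S, τ p.2 = p.1 := by
    let e : {x // x ∈ Set.range (fun p : S => p.1.2)} ≃
        {x // x ∈ Set.range (fun p : S => p.1.1)} :=
      (Equiv.ofInjective _ hf).symm.trans (Equiv.ofInjective _ hg)
    refine ⟨e.extendSubtype, fun p hp => ?_⟩
    have hx : p.2 ∈ Set.range (fun p : S => p.1.2) := ⟨⟨p, hp⟩, rfl⟩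
    rw [Equiv.extendSubtype_apply_of_mem e p.2 hx]
    have h2 : (Equiv.ofInjective _ hf).symm ⟨p.2, hx⟩ = ⟨p, hp⟩ := by
      rw [Equiv.symm_apply_eq]
      rfl
    simp only [e, Equiv.trans_apply, h2]
    rfl
  have hT : (S.image Prod.snd).card = S.card := by
    apply Finset.card_image_of_injOn
    intro p hp q hq h
    by_contra hne
    exact (hS p hp q hq hne).2 h
  have h1 : ((Finset.univ : Finset (Equiv.Perm (Fin n))).filter
      fun σ => ∀ p ∈ S, σ p.2 = p.1).card =
      Fintype.card {f : Equiv.Perm (Fin n) // ∀ a, ¬ (a ∉ S.image Prod.snd) → f a = a} := by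
    rw [Fintype.card_subtype]
    refine Finset.card_bij (fun σ _ => τ⁻¹ * σ) ?_ ?_ ?_
    · intro σ hσ
      simp only [Finset.mem_filter, Finset.mem_univ, true_and] at hσ ⊢
      intro a ha
      obtain ⟨p, hp, rfl⟩ := Finset.mem_image.1 (not_not.1 ha)
      rw [Equiv.Perm.mul_apply, hσ p hp, ← hτ p hp]
      simp
    · intro a _ b _ h
      exact mul_left_cancel h
    · intro f hf
      simp only [Finset.mem_filter, Finset.mem_univ, true_and] at hf
      refine ⟨τ * f, ?_, by simp⟩
      simp only [Finset.mem_filter, Finset.mem_univ, true_and]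
      intro p hp
      rw [Equiv.Perm.mul_apply, hf p.2 (not_not.2 (Finset.mem_image_of_mem _ hp)), hτ p hp]
  rw [h1, ← Fintype.card_congr (Equiv.Perm.subtypeEquivSubtypePerm _), Fintype.card_perm]
  congr 1
  rw [Fintype.card_subtype_compl, Fintype.card_fin, Fintype.card_coe, hT]

lemma prod_complement_eq (n : ℕ) (M : Matrix (Fin n) (Fin n) ℤ) (σ : Equiv.Perm (Fin n)) :
    ∏ i, (Jmat n - M) (σ i) i =
      ∑ S : Finset (Fin n × Fin n),
        if (∀ p ∈ S, σ p.2 = p.1) then ∏ p ∈ S, (- M p.1 p.2) else 0 := by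
  classical
  have h1 : ∏ i, (Jmat n - M) (σ i) i =
      ∏ p ∈ (Finset.univ : Finset (Fin n × Fin n)).filter (fun p => σ p.2 = p.1),
        (1 + - M p.1 p.2) := by
    refine Finset.prod_bij (fun i _ => (σ i, i)) ?_ ?_ ?_ ?_
    · intro i _
      simp
    · intro i _ j _ h
      exact (Prod.ext_iff.1 h).2
    · rintro ⟨a, b⟩ h
      simp only [Finset.mem_filter, Finset.mem_univ, true_and] at h
      exact ⟨b, Finset.mem_univ _, by simp [h]⟩
    · intro i _
      simp [Jmat, sub_eq_add_neg]
  rw [h1, Finset.prod_one_add, ← Finset.sum_filter]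
  refine Finset.sum_congr ?_ fun _ _ => rfl
  ext S
  simp [Finset.subset_iff]

/-- For an `n × n` `(0,1)`-matrix `M`,
`per(J_n - M) = ∑_{j=0}^{n} (-1)^j · ν_j(M) · (n-j)!`. -/
theorem permanent_complement_eq_rook_sum (n : ℕ) (M : Matrix (Fin n) (Fin n) ℤ)
    (hM : ∀ i j, M i j = 0 ∨ M i j = 1) :
    (Jmat n - M).permanent =
      ∑ j ∈ Finset.range (n + 1),
        (-1 : ℤ) ^ j * (rookNum M j : ℤ) * (Nat.factorial (n - j) : ℤ) := by
  classical
  have hper : (Jmat n - M).permanent = ∑ S : Finset (Fin n × Fin n),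
      if (∀ p ∈ S, M p.1 p.2 = 1 ∧ ∀ q ∈ S, p ≠ q → p.1 ≠ q.1 ∧ p.2 ≠ q.2) then
        (-1 : ℤ) ^ S.card * (Nat.factorial (n - S.card) : ℤ) else 0 := by
    unfold Matrix.permanent
    simp_rw [prod_complement_eq]
    rw [Finset.sum_comm]
    refine Finset.sum_congr rfl fun S _ => ?_
    rw [← Finset.sum_filter, Finset.sum_const, nsmul_eq_mul]
    split_ifs with h
    · rw [card_perm_extending n S (fun p hp => (h p hp).2),
        Finset.prod_congr rfl (fun p hp => by rw [(h p hp).1]), Finset.prod_const, mul_comm]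
    · by_cases hone : ∀ p ∈ S, M p.1 p.2 = 1
      · rw [Finset.filter_eq_empty_iff.2, Finset.card_empty, Nat.cast_zero, zero_mul]
        intro σ _ hσ
        refine h fun p hp => ⟨hone p hp, fun q hq hne => ⟨fun h1 => hne ?_, fun h2 => hne ?_⟩⟩
        · refine Prod.ext h1 (σ.injective ?_)
          rw [hσ p hp, hσ q hq, h1]
        · refine Prod.ext ?_ h2
          rw [← hσ p hp, ← hσ q hq, h2]
      · push Not at hone
        obtain ⟨p, hp, hne⟩ := hone
        rw [Finset.prod_eq_zero hp, mul_zero]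
        rw [(hM p.1 p.2).resolve_right hne, neg_zero]
  rw [hper, ← Finset.sum_filter]
  have hmaps : ∀ S ∈ (Finset.univ : Finset (Finset (Fin n × Fin n))).filter (fun S =>
      ∀ p ∈ S, M p.1 p.2 = 1 ∧ ∀ q ∈ S, p ≠ q → p.1 ≠ q.1 ∧ p.2 ≠ q.2),
      S.card ∈ Finset.range (n + 1) := by
    intro S hS
    simp only [Finset.mem_filter, Finset.mem_univ, true_and] at hS
    have hc : (S.image Prod.snd).card = S.card := by
      apply Finset.card_image_of_injOn
      intro p hp q hq h
      by_contra hne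
      exact ((hS p hp).2 q hq hne).2 h
    have := Finset.card_le_univ (S.image Prod.snd)
    rw [Fintype.card_fin] at this
    rw [Finset.mem_range]
    omega
  rw [← Finset.sum_fiberwise_of_maps_to hmaps]
  refine Finset.sum_congr rfl fun j _ => ?_
  rw [Finset.sum_congr rfl (g := fun _ => (-1 : ℤ) ^ j * (Nat.factorial (n - j) : ℤ))
    (fun S hS => by rw [(Finset.mem_filter.1 hS).2]), Finset.sum_const, nsmul_eq_mul]
  have hr : (((Finset.univ : Finset (Finset (Fin n × Fin n))).filter (fun S =>
      ∀ p ∈ S, M p.1 p.2 = 1 ∧ ∀ q ∈ S, p ≠ q → p.1 ≠ q.1 ∧ p.2 ≠ q.2)).filter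
      (fun S => S.card = j)).card = rookNum M j := by
    unfold rookNum
    congr 1
    ext S
    simp only [Finset.mem_filter, Finset.mem_univ, true_and, Finset.mem_powersetCard,
      Finset.subset_univ]
    exact and_comm
  rw [hr]
  ring
end

section
/- For every integer n ≥ 3 and every r with 3 ≤ r ≤ n, per((J_n − I − P)[1|r]) = per((J_n − I − P)[1|n−r+3]). -/
open Finset

/-- The map of the column indices induced by `c ↦ 1 - c (mod m)`. -/
def colFun (m : ℕ) (j : Fin (m - 1)) (hm : 3 ≤ m) : Fin (m - 1) :=
  ⟨if j.1 ≤ 1 then 1 - j.1 else m - j.1, by have := j.isLt; split_ifs <;> omega⟩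

/-- `colFun` as a permutation. -/
def colInv (m : ℕ) (hm : 3 ≤ m) : Equiv.Perm (Fin (m - 1)) :=
  Function.Involutive.toPerm (fun j => colFun m j hm) (by
      intro j
      have := j.isLt
      ext
      simp only [colFun]
      split_ifs <;> omega)

theorem colInv_val (m : ℕ) (hm : 3 ≤ m) (j : Fin (m - 1)) :
    (colInv m hm j).1 = if j.1 ≤ 1 then 1 - j.1 else m - j.1 := rfl

theorem skipIdx_val {m : ℕ} (a : ℕ) (i : Fin (m - 1)) :
    (skipIdx a i).1 = if i.1 < a then i.1 else i.1 + 1 := by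
  unfold skipIdx
  split_ifs <;> rfl

/-- The symmetry `per((J_n - I - P)[1|r]) = per((J_n - I - P)[1|n-r+3])` for `3 ≤ r ≤ n`. -/
theorem permanent_minor_symmetry (n r : ℕ) (hn : 3 ≤ n) (hr : 3 ≤ r) (hrn : r ≤ n) :
    (delRC (Jmat n - 1 - Pmat n) 0 (r - 1)).permanent =
      (delRC (Jmat n - 1 - Pmat n) 0 (n - r + 3 - 1)).permanent := by
  have key : delRC (Jmat n - 1 - Pmat n) 0 (r - 1) =
      ((delRC (Jmat n - 1 - Pmat n) 0 (n - r + 3 - 1)).submatrix Fin.revPerm id).submatrix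
        id (colInv n hn) := by
    ext i j
    have hi := i.isLt
    have hj := j.isLt
    have hmod : ∀ k : ℕ, k < n → (k + 1) % n = if k + 1 = n then 0 else k + 1 := by
      intro k hk
      split_ifs with h
      · rw [h, Nat.mod_self]
      · exact Nat.mod_eq_of_lt (by omega)
    have ha : (skipIdx 0 i : Fin n).1 = i.1 + 1 := by simp [skipIdx_val]
    have ha' : (skipIdx 0 (Fin.rev i) : Fin n).1 = n - 1 - i.1 := by
      simp [skipIdx_val, Fin.val_rev]; omega
    have hb := skipIdx_val (r - 1) j
    have hb' := skipIdx_val (n - r + 3 - 1) (colInv n hn j)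
    rw [colInv_val] at hb'
    simp only [delRC, Jmat, Pmat, Matrix.submatrix_apply, Matrix.of_apply, Matrix.sub_apply,
      Matrix.one_apply, Fin.ext_iff, Fin.revPerm_apply, id]
    rw [hmod _ (Fin.isLt _), hmod _ (Fin.isLt _), ha, ha']
    generalize (skipIdx (r - 1) j : Fin n).1 = c at *
    generalize (skipIdx (n - r + 3 - 1) (colInv n hn j) : Fin n).1 = c' at *
    have h1 : i.1 + 1 = c ↔ c' = if n - 1 - i.1 + 1 = n then 0 else n - 1 - i.1 + 1 := by
      split_ifs at * <;> omega
    have h2 : n - 1 - i.1 = c' ↔ c = if i.1 + 1 + 1 = n then 0 else i.1 + 1 + 1 := by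
      split_ifs at * <;> omega
    simp only [h1, h2]
    ring
  rw [key, Matrix.permanent_permute_rows, Matrix.permanent_permute_cols]
end

section
/- For every integer n ≥ 3 and every r with 3 ≤ r ≤ n, the rook numbers of the (n−1)×(n−1) matrix (I + P)[1|r] are given by: for every k with 0 ≤ k ≤ n−1, ν_k((I+P)[1|r]) = Σ_{i=0}^{min(k, r−2)} C(2r−i−4, i) · C(2(n−r)−k+i+2, k−i). -/
open Finset

/-- Number of `k`-subsets of `T` without two consecutive elements. -/
def sparseCount (T : Finset ℕ) (k : ℕ) : ℕ :=
  ((Finset.powersetCard k T).filter fun S => ∀ t ∈ S, t + 1 ∉ S).card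

theorem sparseCount_zero (T : Finset ℕ) : sparseCount T 0 = 1 := by
  simp [sparseCount, Finset.filter_singleton]

theorem sparseCount_empty (k : ℕ) : sparseCount ∅ (k + 1) = 0 := by
  unfold sparseCount
  rw [Finset.powersetCard_eq_empty.2 (by simp)]
  simp

theorem sparseCount_insert (T T' : Finset ℕ) (x k : ℕ) (hx : ∀ t ∈ T, t < x)
    (hT' : ∀ t, t ∈ T' ↔ t ∈ T ∧ t + 1 ≠ x) :
    sparseCount (insert x T) (k + 1) = sparseCount T (k + 1) + sparseCount T' k := by
  have hxT : x ∉ T := fun h => lt_irrefl _ (hx x h)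
  unfold sparseCount
  rw [Finset.powersetCard_succ_insert hxT, Finset.filter_union, Finset.card_union_of_disjoint]
  · congr 1
    symm
    apply Finset.card_bij (fun S _ => insert x S)
    · intro S hS
      simp only [Finset.mem_filter, Finset.mem_powersetCard, Finset.mem_image] at hS ⊢
      obtain ⟨⟨hS1, hS2⟩, hS3⟩ := hS
      refine ⟨⟨S, ⟨fun t ht => ((hT' t).1 (hS1 ht)).1, hS2⟩, rfl⟩, ?_⟩
      intro t ht
      rw [Finset.mem_insert] at ht ⊢
      rcases ht with rfl | ht
      · rintro (h | h)
        · omega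
        · have := hx _ ((hT' _).1 (hS1 h)).1
          omega
      · rintro (h | h)
        · exact ((hT' t).1 (hS1 ht)).2 h
        · exact hS3 t ht h
    · intro S hS S' hS' h
      simp only [Finset.mem_filter, Finset.mem_powersetCard] at hS hS'
      have h1 : x ∉ S := fun hh => hxT ((hT' x).1 (hS.1.1 hh)).1
      have h2 : x ∉ S' := fun hh => hxT ((hT' x).1 (hS'.1.1 hh)).1
      rw [← Finset.erase_insert h1, ← Finset.erase_insert h2]
      exact congrArg (fun s => Finset.erase s x) h
    · intro S hS
      simp only [Finset.mem_filter, Finset.mem_powersetCard, Finset.mem_image] at hS ⊢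
      obtain ⟨⟨A, ⟨hA1, hA2⟩, rfl⟩, hS⟩ := hS
      refine ⟨A, ⟨⟨fun t ht => (hT' t).2 ⟨hA1 ht, ?_⟩, hA2⟩, ?_⟩, rfl⟩
      · intro h
        exact hS t (Finset.mem_insert_of_mem ht) (by rw [h]; exact Finset.mem_insert_self _ _)
      · intro t ht h
        exact hS t (Finset.mem_insert_of_mem ht) (Finset.mem_insert_of_mem h)
  · rw [Finset.disjoint_left]
    intro S hS hS'
    simp only [Finset.mem_filter, Finset.mem_powersetCard, Finset.mem_image] at hS hS'
    obtain ⟨⟨A, _, rfl⟩, _⟩ := hS'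
    exact hxT (hS.1.1 (Finset.mem_insert_self _ _))

/-- Closed form for paths. -/
def pathNum (m k : ℕ) : ℕ := (m + 1 - k).choose k

theorem pathNum_zero (m : ℕ) : pathNum m 0 = 1 := by simp [pathNum]

theorem pathNum_rec (m k : ℕ) :
    pathNum (m + 2) (k + 1) = pathNum (m + 1) (k + 1) + pathNum m k := by
  unfold pathNum
  by_cases h : k ≤ m + 1
  · rw [show m + 2 + 1 - (k + 1) = (m + 1 - k) + 1 by omega,
      show m + 1 + 1 - (k + 1) = m + 1 - k by omega, Nat.choose_succ_succ, add_comm]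
  · rw [show m + 2 + 1 - (k + 1) = 0 by omega, show m + 1 + 1 - (k + 1) = 0 by omega,
      show m + 1 - k = 0 by omega]
    obtain ⟨k, rfl⟩ : ∃ j, k = j + 1 := ⟨k - 1, by omega⟩
    simp

theorem pathNum_nil (k : ℕ) : pathNum 0 (k + 1) = 0 := by
  simp [pathNum]

theorem pathNum_one (k : ℕ) : pathNum 1 (k + 1) = pathNum 0 k := by
  cases k with
  | zero => simp [pathNum]
  | succ k => rw [pathNum_nil]; simp [pathNum, show 1 + 1 - (k + 1 + 1) = 0 by omega]

theorem sparseCount_range (m k : ℕ) : sparseCount (Finset.range m) k = pathNum m k := by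
  induction m using Nat.strong_induction_on generalizing k with
  | _ m ih =>
  cases k with
  | zero => rw [sparseCount_zero, pathNum_zero]
  | succ k =>
    match m, ih with
    | 0, _ => rw [Finset.range_zero, sparseCount_empty, pathNum_nil]
    | 1, ih =>
      rw [Finset.range_add_one, sparseCount_insert (Finset.range 0) (Finset.range 0) 0 k
        (by simp) (by simp), ih 0 (by omega), ih 0 (by omega), pathNum_one, pathNum_nil, zero_add]
    | m + 2, ih =>
      rw [Finset.range_add_one, sparseCount_insert (Finset.range (m + 1)) (Finset.range m) (m + 1) k
        (by simp) (by intro t; simp only [Finset.mem_range]; omega), ih (m + 1) (by omega),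
        ih m (by omega), pathNum_rec]

/-- Path of `a` vertices and path of `m` vertices. -/
def gapSet (a m : ℕ) : Finset ℕ :=
  (Finset.range (a + 2 + m)).filter fun t => t ≠ a ∧ t ≠ a + 1

/-- The convolution. -/
def convNum (a m k : ℕ) : ℕ := ∑ i ∈ Finset.range (k + 1), pathNum a i * pathNum m (k - i)

theorem convNum_zero (a m : ℕ) : convNum a m 0 = 1 := by simp [convNum, pathNum_zero]

theorem convNum_nil (a k : ℕ) : convNum a 0 k = pathNum a k := by
  unfold convNum
  rw [Finset.sum_range_succ, Finset.sum_eq_zero]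
  · simp [pathNum_zero]
  · intro i hi
    rw [Finset.mem_range] at hi
    rw [show k - i = (k - i - 1) + 1 by omega, pathNum_nil, mul_zero]

theorem convNum_one (a k : ℕ) :
    convNum a 1 (k + 1) = convNum a 0 (k + 1) + convNum a 0 k := by
  rw [convNum_nil]
  unfold convNum
  rw [Finset.sum_range_succ, Nat.sub_self, pathNum_zero, mul_one, add_comm]
  congr 1
  apply Finset.sum_congr rfl
  intro i hi
  rw [Finset.mem_range] at hi
  rw [show k + 1 - i = (k - i) + 1 by omega, pathNum_one]

theorem convNum_rec (a m k : ℕ) :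
    convNum a (m + 2) (k + 1) = convNum a (m + 1) (k + 1) + convNum a m k := by
  unfold convNum
  rw [Finset.sum_range_succ, Finset.sum_range_succ _ (k + 1), Nat.sub_self, pathNum_zero,
    pathNum_zero, add_right_comm, ← Finset.sum_add_distrib]
  congr 1
  apply Finset.sum_congr rfl
  intro i hi
  rw [Finset.mem_range] at hi
  rw [show k + 1 - i = (k - i) + 1 by omega, pathNum_rec, mul_add]

theorem gapSet_zero (a : ℕ) : gapSet a 0 = Finset.range a := by
  ext t; simp only [gapSet, Finset.mem_filter, Finset.mem_range]; omega

theorem gapSet_succ (a m : ℕ) : gapSet a (m + 1) = insert (a + 2 + m) (gapSet a m) := by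
  ext t; simp only [gapSet, Finset.mem_filter, Finset.mem_range, Finset.mem_insert]; omega

theorem sparseCount_gap (a m k : ℕ) : sparseCount (gapSet a m) k = convNum a m k := by
  induction m using Nat.strong_induction_on generalizing k with
  | _ m ih =>
  cases k with
  | zero => rw [sparseCount_zero, convNum_zero]
  | succ k =>
    match m, ih with
    | 0, _ => rw [gapSet_zero, sparseCount_range, convNum_nil]
    | 1, ih =>
      rw [gapSet_succ, sparseCount_insert (gapSet a 0) (gapSet a 0) (a + 2 + 0) k
        (by intro t; simp only [gapSet, Finset.mem_filter, Finset.mem_range]; omega)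
        (by intro t; simp only [gapSet, Finset.mem_filter, Finset.mem_range]; omega),
        ih 0 (by omega), ih 0 (by omega), convNum_one]
    | m + 2, ih =>
      rw [gapSet_succ, sparseCount_insert (gapSet a (m + 1)) (gapSet a m) (a + 2 + (m + 1)) k
        (by intro t; simp only [gapSet, Finset.mem_filter, Finset.mem_range]; omega)
        (by intro t; simp only [gapSet, Finset.mem_filter, Finset.mem_range]; omega),
        ih (m + 1) (by omega), ih m (by omega), convNum_rec]

/-- Transfer of rook placements along an encoding of the board as a linear order. -/
theorem rookNum_eq_sparse {α β : Type*} [Fintype α] [Fintype β] [DecidableEq α] [DecidableEq β]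
    (M : Matrix α β ℤ) (T : Finset ℕ) (enc : α × β → ℕ)
    (h1 : ∀ p, M p.1 p.2 = 1 → enc p ∈ T)
    (h2 : ∀ t ∈ T, ∃ p : α × β, M p.1 p.2 = 1 ∧ enc p = t)
    (h3 : ∀ p q : α × β, M p.1 p.2 = 1 → M q.1 q.2 = 1 → enc p = enc q → p = q)
    (h4 : ∀ p q : α × β, M p.1 p.2 = 1 → M q.1 q.2 = 1 → p ≠ q →
      ((p.1 = q.1 ∨ p.2 = q.2) ↔ (enc q = enc p + 1 ∨ enc p = enc q + 1))) (k : ℕ) :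
    rookNum M k = sparseCount T k := by
  unfold rookNum sparseCount
  apply Finset.card_bij (fun S _ => S.image enc)
  · intro S hS
    simp only [Finset.mem_filter, Finset.mem_powersetCard] at hS ⊢
    obtain ⟨⟨_, hc⟩, hS⟩ := hS
    refine ⟨⟨?_, ?_⟩, ?_⟩
    · intro t ht
      obtain ⟨p, hp, rfl⟩ := Finset.mem_image.1 ht
      exact h1 p (hS p hp).1
    · rw [Finset.card_image_of_injOn, hc]
      intro p hp q hq h
      exact h3 p q (hS p hp).1 (hS q hq).1 h
    · intro t ht ht'
      obtain ⟨p, hp, rfl⟩ := Finset.mem_image.1 ht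
      obtain ⟨q, hq, hpq⟩ := Finset.mem_image.1 ht'
      have hne : p ≠ q := by rintro rfl; omega
      have := (hS p hp).2 q hq hne
      rcases (h4 p q (hS p hp).1 (hS q hq).1 hne).2 (Or.inl hpq) with h | h
      · exact this.1 h
      · exact this.2 h
  · intro S hS S' hS' h
    simp only [Finset.mem_filter, Finset.mem_powersetCard] at hS hS'
    have key : ∀ A B : Finset (α × β), (∀ p ∈ A, M p.1 p.2 = 1) → (∀ p ∈ B, M p.1 p.2 = 1) →
        A.image enc = B.image enc → A ⊆ B := by
      intro A B hA hB hAB p hp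
      have : enc p ∈ B.image enc := hAB ▸ Finset.mem_image_of_mem enc hp
      obtain ⟨q, hq, hqp⟩ := Finset.mem_image.1 this
      rw [← h3 q p (hB q hq) (hA p hp) hqp]
      exact hq
    exact Finset.Subset.antisymm
      (key S S' (fun p hp => (hS.2 p hp).1) (fun p hp => (hS'.2 p hp).1) h)
      (key S' S (fun p hp => (hS'.2 p hp).1) (fun p hp => (hS.2 p hp).1) h.symm)
  · intro S hS
    simp only [Finset.mem_filter, Finset.mem_powersetCard] at hS
    obtain ⟨⟨hST, hc⟩, hS⟩ := hS
    have him : (Finset.univ.filter fun p : α × β => M p.1 p.2 = 1 ∧ enc p ∈ S).image enc = S := by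
      ext t
      simp only [Finset.mem_image, Finset.mem_filter, Finset.mem_univ, true_and]
      constructor
      · rintro ⟨p, ⟨_, hp⟩, rfl⟩
        exact hp
      · intro ht
        obtain ⟨p, hp, rfl⟩ := h2 t (hST ht)
        exact ⟨p, ⟨hp, ht⟩, rfl⟩
    refine ⟨Finset.univ.filter fun p : α × β => M p.1 p.2 = 1 ∧ enc p ∈ S, ?_, him⟩
    simp only [Finset.mem_filter, Finset.mem_powersetCard, Finset.mem_univ, true_and]
    refine ⟨⟨Finset.subset_univ _, ?_⟩, ?_⟩
    · rw [← hc, ← congrArg Finset.card him, Finset.card_image_of_injOn]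
      intro p hp q hq h
      simp only [Finset.coe_filter, Finset.mem_univ, true_and, Set.mem_setOf_eq] at hp hq
      exact h3 p q hp.1 hq.1 h
    · rintro p ⟨hp, hpS⟩
      refine ⟨hp, ?_⟩
      rintro q ⟨hq, hqS⟩ hne
      rw [← not_or, h4 p q hp hq hne]
      rintro (h | h)
      · exact hS _ hpS (h ▸ hqS)
      · exact hS _ hqS (h ▸ hpS)

theorem minor_entry (n c : ℕ) (hn : 3 ≤ n) (i j : Fin (n - 1)) :
    delRC (1 + Pmat n) 0 c i j = 1 ↔
      ((if j.1 < c then j.1 else j.1 + 1) = i.1 + 1 ∨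
        (if j.1 < c then j.1 else j.1 + 1) = if i.1 + 2 < n then i.1 + 2 else 0) := by
  have hi := i.isLt
  have hmod : (i.1 + 1 + 1) % n = if i.1 + 2 < n then i.1 + 2 else 0 := by
    split_ifs with h
    · exact Nat.mod_eq_of_lt h
    · rw [show i.1 + 1 + 1 = n by omega, Nat.mod_self]
  have h0 : (skipIdx 0 i : Fin n).1 = i.1 + 1 := by rw [skipIdx_val]; simp
  have hne : i.1 + 1 ≠ if i.1 + 2 < n then i.1 + 2 else 0 := by split_ifs <;> omega
  simp only [delRC, Pmat, Matrix.of_apply, Matrix.add_apply, Matrix.one_apply, Fin.ext_iff, h0,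
    hmod]
  rw [skipIdx_val]
  generalize (if j.1 < c then j.1 else j.1 + 1) = y
  generalize (if i.1 + 2 < n then i.1 + 2 else 0) = z at *
  by_cases h1 : i.1 + 1 = y <;> by_cases h2 : y = z <;> simp [h1, h2] <;> omega

theorem rookNum_minor_sparse (n r : ℕ) (hn : 3 ≤ n) (hr : 3 ≤ r) (hrn : r ≤ n) (k : ℕ) :
    rookNum (delRC (1 + Pmat n) 0 (r - 1)) k =
      sparseCount (gapSet (2 * r - 5) (2 * (n - r) + 1)) k := by
  apply rookNum_eq_sparse _ _ (fun p => 2 * p.1.1 +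
    (if (if p.2.1 < r - 1 then p.2.1 else p.2.1 + 1) = p.1.1 + 1 then 0 else 1))
  · rintro ⟨⟨i, hi⟩, ⟨j, hj⟩⟩ h
    rw [minor_entry n _ hn] at h
    simp only [gapSet, Finset.mem_filter, Finset.mem_range] at h ⊢
    split_ifs at h ⊢ <;> omega
  · intro t ht
    simp only [gapSet, Finset.mem_filter, Finset.mem_range] at ht
    have hi : t / 2 < n - 1 := by omega
    obtain ⟨y, hy⟩ : ∃ y, y = if t % 2 = 0 then t / 2 + 1 else
      if t / 2 + 2 < n then t / 2 + 2 else 0 := ⟨_, rfl⟩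
    have hj : (if y < r - 1 then y else y - 1) < n - 1 := by
      split_ifs at hy ⊢ <;> omega
    refine ⟨(⟨t / 2, hi⟩, ⟨_, hj⟩), ?_, ?_⟩
    · rw [minor_entry n _ hn]
      simp only
      split_ifs at hy ⊢ <;> omega
    · simp only
      split_ifs at hy ⊢ <;> omega
  · rintro ⟨⟨i, hi⟩, ⟨j, hj⟩⟩ ⟨⟨i', hi'⟩, ⟨j', hj'⟩⟩ h h' he
    rw [minor_entry n _ hn] at h h'
    simp only [Prod.mk.injEq, Fin.mk.injEq] at h h' he ⊢
    grind
  · rintro ⟨⟨i, hi⟩, ⟨j, hj⟩⟩ ⟨⟨i', hi'⟩, ⟨j', hj'⟩⟩ h h' hne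
    rw [minor_entry n _ hn] at h h'
    simp only [Prod.mk.injEq, Fin.mk.injEq, ne_eq] at h h' hne ⊢
    grind

theorem intChoose_eq (a : ℤ) (b m : ℕ) (h : a = (m : ℤ) + 1 - b) :
    intChoose a b = (pathNum m b : ℤ) := by
  unfold intChoose pathNum
  split_ifs with hc
  · rw [show a.toNat = m + 1 - b by omega, Int.toNat_natCast]
  · rw [Nat.choose_eq_zero_of_lt (by omega)]; simp

/-- The rook numbers of the `(n-1) × (n-1)` matrix `(I + P)[1|r]`:  for `0 ≤ k ≤ n-1`,
`ν_k((I+P)[1|r]) = ∑_{i=0}^{min(k, r-2)} C(2r-i-4, i) · C(2(n-r)-k+i+2, k-i)`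
(with `C(a,b) = 0` unless `0 ≤ b ≤ a`). -/
theorem rookNum_IP_minor (n r : ℕ) (hn : 3 ≤ n) (hr : 3 ≤ r) (hrn : r ≤ n)
    (k : ℕ) (hk : k ≤ n - 1) :
    (rookNum (delRC (1 + Pmat n) 0 (r - 1)) k : ℤ) =
      ∑ i ∈ Finset.range (min k (r - 2) + 1),
        intChoose (2 * (r : ℤ) - (i : ℤ) - 4) (i : ℤ) *
          intChoose (2 * ((n : ℤ) - (r : ℤ)) - (k : ℤ) + (i : ℤ) + 2) ((k : ℤ) - (i : ℤ)) := by
  rw [rookNum_minor_sparse n r hn hr hrn, sparseCount_gap, convNum]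
  push_cast
  symm
  have hsub : Finset.range (min k (r - 2) + 1) ⊆ Finset.range (k + 1) := by
    intro i; simp only [Finset.mem_range]; omega
  rw [← Finset.sum_subset hsub]
  · apply Finset.sum_congr rfl
    intro i hi
    rw [Finset.mem_range] at hi
    rw [intChoose_eq _ i (2 * r - 5) (by omega),
      show (k : ℤ) - (i : ℤ) = ((k - i : ℕ) : ℤ) by omega,
      intChoose_eq _ (k - i) (2 * (n - r) + 1) (by omega)]
  · intro i hi hi'
    rw [Finset.mem_range] at hi hi'
    have : pathNum (2 * r - 5) i = 0 := by
      unfold pathNum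
      exact Nat.choose_eq_zero_of_lt (by omega)
    rw [this]; simp
end

section
/- For every integer n ≥ 3 and every r with 3 ≤ r ≤ n, per((J_n − I − P)[1|r]) = Σ_{k=0}^{n−1} (−1)^k · (n−k−1)! · Σ_{i=max(r+k−n−1, 0)}^{min(k, r−2)} C(2r−i−4, i) · C(2(n−r)−k+i+2, k−i). (This is the solution of the ménage problem in which one fixed husband has already been seated on the chair at distance r−1, measured clockwise, from his wife.) -/
open Finset

def Sparse (S : Finset ℕ) : Prop := ∀ p ∈ S, p + 1 ∉ S

open Classical in
noncomputable def spSum (V : Finset ℕ) (φ : ℕ → ℤ) : ℤ :=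
  ∑ S ∈ V.powerset, if Sparse S then φ S.card else 0

lemma spSum_insert (V : Finset ℕ) (x : ℕ) (φ : ℕ → ℤ) (h : ∀ v ∈ V, v < x) :
    spSum (insert x V) φ = spSum V φ + spSum (V.filter (fun v => v + 1 < x)) (fun k => φ (k + 1)) := by
  classical
  have hx : x ∉ V := fun hh => lt_irrefl _ (h x hh)
  unfold spSum
  rw [Finset.sum_powerset_insert hx]
  congr 1
  have hsub : (V.filter (fun v => v + 1 < x)).powerset ⊆ V.powerset :=
    Finset.powerset_mono.2 (Finset.filter_subset _ _)
  rw [← Finset.sum_subset hsub]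
  · apply Finset.sum_congr rfl
    intro S hS
    rw [Finset.mem_powerset] at hS
    have hS' : ∀ v ∈ S, v + 1 < x := fun v hv => (Finset.mem_filter.1 (hS hv)).2
    have hxS : x ∉ S := fun hh => by have := hS' x hh; omega
    rw [Finset.card_insert_of_notMem hxS]
    have : Sparse (insert x S) ↔ Sparse S := by
      unfold Sparse
      constructor
      · intro H p hp hp'
        exact H p (Finset.mem_insert_of_mem hp) (Finset.mem_insert_of_mem hp')
      · intro H p hp hp'
        rw [Finset.mem_insert] at hp hp'
        rcases hp with rfl | hp
        · rcases hp' with hp' | hp'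
          · omega
          · have := hS' _ hp'; omega
        · rcases hp' with hp' | hp'
          · have := hS' _ hp; omega
          · exact H p hp hp'
    simp only [this]
  · intro S hS hS'
    rw [if_neg]
    intro H
    apply hS'
    rw [Finset.mem_powerset] at hS ⊢
    intro v hv
    rw [Finset.mem_filter]
    refine ⟨hS hv, ?_⟩
    have h1 := h v (hS hv)
    have h2 := H v (Finset.mem_insert_of_mem hv)
    rcases Nat.lt_or_ge (v+1) x with h3 | h3
    · exact h3
    · exact absurd (by rw [show v + 1 = x by omega]; exact Finset.mem_insert_self _ _) h2

lemma choose_rec (L : ℕ) (a : ℕ → ℤ) :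
    ∑ i ∈ range (L + 3), ((L + 3 - i).choose i : ℤ) * a i =
      ∑ i ∈ range (L + 2), ((L + 2 - i).choose i : ℤ) * a i +
      ∑ i ∈ range (L + 1), ((L + 1 - i).choose i : ℤ) * a (i + 1) := by
  have e1 : ∑ i ∈ range (L + 2), ((L + 2 - i).choose i : ℤ) * a i =
      ∑ i ∈ range (L + 3), ((L + 2 - i).choose i : ℤ) * a i := by
    rw [Finset.sum_range_succ _ (L+2)]; simp
  have e2 : ∑ i ∈ range (L + 1), ((L + 1 - i).choose i : ℤ) * a (i + 1) =
      ∑ i ∈ range (L + 2), ((L + 1 - i).choose i : ℤ) * a (i + 1) := by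
    rw [Finset.sum_range_succ _ (L+1)]; simp
  rw [e1, e2, Finset.sum_range_succ' _ (L+2), Finset.sum_range_succ' _ (L+2)]
  have : ∑ j ∈ range (L + 2), ((L + 3 - (j+1)).choose (j+1) : ℤ) * a (j+1) =
     ∑ j ∈ range (L + 2), ((L + 2 - (j+1)).choose (j+1) : ℤ) * a (j+1) +
     ∑ i ∈ range (L + 2), ((L + 1 - i).choose i : ℤ) * a (i + 1) := by
    rw [← Finset.sum_add_distrib]
    apply Finset.sum_congr rfl
    intro j hj
    rw [Finset.mem_range] at hj
    rw [show L + 3 - (j+1) = (L + 1 - j) + 1 by omega, show L + 2 - (j+1) = L + 1 - j by omega,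
      Nat.choose_succ_succ]
    push_cast; ring
  rw [this]
  simp only [Nat.choose_zero_right]
  ring

lemma spSum_block (V : Finset ℕ) (x : ℕ) (h : ∀ v ∈ V, v + 1 < x) (L : ℕ) : ∀ (φ : ℕ → ℤ),
    spSum (V ∪ Ico x (x + L)) φ =
      ∑ i ∈ range (L + 1), ((L + 1 - i).choose i : ℤ) * spSum V (fun k => φ (k + i)) := by
  induction L using Nat.strong_induction_on with
  | _ L ih =>
  intro φ
  match L with
  | 0 => simp
  | 1 =>
    have : V ∪ Ico x (x + 1) = insert x V := by
      ext v; simp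
    rw [this, spSum_insert _ _ _ (fun v hv => by have := h v hv; omega)]
    rw [Finset.filter_true_of_mem h]
    simp [Finset.sum_range_succ]
  | L + 2 =>
    have e : V ∪ Ico x (x + (L + 2)) = insert (x + L + 1) (V ∪ Ico x (x + (L + 1))) := by
      ext v
      simp only [mem_union, mem_Ico, mem_insert]
      constructor
      · rintro (h | h)
        · tauto
        · by_cases hv : v = x + L + 1
          · tauto
          · right; right; omega
      · rintro (h | h | h)
        · right; omega
        · tauto
        · right; omega
    have e2 : (V ∪ Ico x (x + (L + 1))).filter (fun v => v + 1 < x + L + 1) = V ∪ Ico x (x + L) := by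
      ext v
      simp only [mem_union, mem_Ico, mem_filter]
      constructor
      · rintro ⟨h | h, h'⟩
        · tauto
        · right; omega
      · rintro (hv | hv)
        · exact ⟨Or.inl hv, by have := h v hv; omega⟩
        · exact ⟨by right; omega, by omega⟩
    rw [e, spSum_insert, e2, ih (L+1) (by omega), ih L (by omega)]
    · rw [choose_rec]
      congr 1
    · intro v hv
      simp only [mem_union, mem_Ico] at hv
      rcases hv with hv | hv
      · have := h v hv; omega
      · omega

lemma spSum_two (a L : ℕ) (φ : ℕ → ℤ) :
    spSum (range a ∪ Ico (a + 2) (a + 2 + L)) φ =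
      ∑ j ∈ range (L + 1), ∑ i ∈ range (a + 1),
        ((L + 1 - j).choose j : ℤ) * (((a + 1 - i).choose i : ℤ) * φ (i + j)) := by
  rw [spSum_block _ _ (by intro v hv; rw [mem_range] at hv; omega)]
  apply Finset.sum_congr rfl
  intro j _
  rw [← Finset.mul_sum]
  congr 1
  have := spSum_block ∅ 0 (by simp) a (fun k => φ (k + j))
  rw [zero_add, ← Finset.range_eq_Ico, Finset.empty_union] at this
  rw [this]
  apply Finset.sum_congr rfl
  intro i _
  simp [spSum, Sparse]

lemma card_perm_prescribed {α ι : Type*} [Fintype α] [DecidableEq α] [DecidableEq ι]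
    (S : Finset ι) (f g : ι → α) (hf : Set.InjOn f S) (hg : Set.InjOn g S) :
    (Finset.univ.filter (fun σ : Equiv.Perm α => ∀ x ∈ S, σ (f x) = g x)).card =
      (Fintype.card α - S.card).factorial := by
  classical
  let e : {a // a ∈ S.image f} ≃ {a // a ∈ S.image g} :=
    (Equiv.Set.imageOfInjOn f S hf |>.symm.trans (Equiv.Set.imageOfInjOn g S hg)) |> fun E =>
    (Equiv.subtypeEquivRight (by intro a; simp)).trans (E.trans (Equiv.subtypeEquivRight (by intro a; simp)))
  have he : ∀ x (hx : x ∈ S), ((e ⟨f x, mem_image_of_mem f hx⟩ : {a // a ∈ S.image g}) : α) = g x := by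
    intro x hx
    have h0 : (Equiv.Set.imageOfInjOn f S hf).symm ⟨f x, Set.mem_image_of_mem f hx⟩ = ⟨x, hx⟩ := by
      rw [Equiv.symm_apply_eq]; rfl
    change ((Equiv.Set.imageOfInjOn g S hg) ((Equiv.Set.imageOfInjOn f S hf).symm
      ⟨f x, Set.mem_image_of_mem f hx⟩)).1 = g x
    rw [h0]; rfl
  let τ : Equiv.Perm α := e.extendSubtype
  have hτ : ∀ x ∈ S, τ (f x) = g x := by
    intro x hx
    rw [← he x hx]
    exact Equiv.extendSubtype_apply_of_mem e _ (mem_image_of_mem f hx)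
  have h1 : (Finset.univ.filter (fun σ : Equiv.Perm α => ∀ x ∈ S, σ (f x) = g x)).card =
     Fintype.card {σ : Equiv.Perm α // ∀ a, ¬ (a ∉ S.image f) → σ a = a} := by
    rw [Fintype.card_subtype]
    apply Finset.card_bij (fun σ _ => τ⁻¹ * σ)
    · intro σ hσ
      simp only [mem_filter, mem_univ, true_and] at hσ ⊢
      intro a ha
      rw [not_not, mem_image] at ha
      obtain ⟨x, hx, rfl⟩ := ha
      rw [Equiv.Perm.mul_apply, hσ x hx, ← hτ x hx]; simp
    · intro σ _ σ' _ h
      exact mul_left_cancel h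
    · intro σ hσ
      simp only [mem_filter, mem_univ, true_and] at hσ
      refine ⟨τ * σ, ?_, by simp⟩
      simp only [mem_filter, mem_univ, true_and]
      intro x hx
      rw [Equiv.Perm.mul_apply, hσ _ (by rw [not_not]; exact mem_image_of_mem f hx), hτ x hx]
  rw [h1, ← Fintype.card_congr (Equiv.Perm.subtypeEquivSubtypePerm (fun a => a ∉ S.image f)),
    Fintype.card_perm, Fintype.card_subtype_compl]
  congr 2
  rw [Fintype.card_coe, Finset.card_image_of_injOn hf]

/-- Row (as an index of the reduced matrix) of the `p`-th cell of the forbidden path. -/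
def rowIdx (n : ℕ) (hn : 3 ≤ n) (p : ℕ) : Fin (n - 1) :=
  if h : p / 2 < n - 1 then ⟨p / 2, h⟩ else ⟨0, by omega⟩

/-- Original (0-based) column of the `p`-th cell. -/
def colVal (n p : ℕ) : ℕ := if 1 + (p + 1) / 2 = n then 0 else 1 + (p + 1) / 2

/-- Column in the reduced matrix, as a natural number. -/
def colNat (n r p : ℕ) : ℕ := if colVal n p < r - 1 then colVal n p else colVal n p - 1

/-- Column in the reduced matrix. -/
def colIdx (n r : ℕ) (hn : 3 ≤ n) (p : ℕ) : Fin (n - 1) :=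
  if h : colNat n r p < n - 1 then ⟨colNat n r p, h⟩ else ⟨0, by omega⟩

/-- The cells of the path outside the deleted column. -/
def cells (n r : ℕ) : Finset ℕ :=
  range (2 * r - 5) ∪ Ico (2 * r - 5 + 2) (2 * r - 5 + 2 + (2 * (n - r) + 1))

lemma mem_cells {n r p : ℕ} (hr : 3 ≤ r) (hrn : r ≤ n) (hp : p ∈ cells n r) :
    p < 2 * (n - 1) ∧ p ≠ 2 * r - 5 ∧ p ≠ 2 * r - 4 := by
  simp only [cells, mem_union, mem_range, mem_Ico] at hp
  omega

lemma skip_val {n a : ℕ} (i : Fin (n - 1)) :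
    (skipIdx a i : Fin n).1 = if i.1 < a then i.1 else i.1 + 1 := by
  unfold skipIdx; split_ifs <;> rfl

lemma rowIdx_eq {n r p q : ℕ} (hn : 3 ≤ n) (hr : 3 ≤ r) (hrn : r ≤ n) (hp : p ∈ cells n r)
    (hq : q ∈ cells n r) : rowIdx n hn p = rowIdx n hn q ↔ p / 2 = q / 2 := by
  have h1 := mem_cells hr hrn hp
  have h2 := mem_cells hr hrn hq
  unfold rowIdx
  rw [dif_pos (by omega), dif_pos (by omega), Fin.mk.injEq]

lemma colNat_lt {n r p : ℕ} (hr : 3 ≤ r) (hrn : r ≤ n) (hp : p ∈ cells n r) :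
    colNat n r p < n - 1 := by
  have h1 := mem_cells hr hrn hp
  unfold colNat colVal
  split_ifs <;> omega

lemma colIdx_eq {n r p q : ℕ} (hn : 3 ≤ n) (hr : 3 ≤ r) (hrn : r ≤ n) (hp : p ∈ cells n r)
    (hq : q ∈ cells n r) : colIdx n r hn p = colIdx n r hn q ↔ (p + 1) / 2 = (q + 1) / 2 := by
  have h1 := mem_cells hr hrn hp
  have h2 := mem_cells hr hrn hq
  unfold colIdx
  rw [dif_pos (colNat_lt hr hrn hp), dif_pos (colNat_lt hr hrn hq), Fin.mk.injEq]
  unfold colNat colVal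
  split_ifs <;> omega

lemma skip_eq_iff {n r p : ℕ} (hn : 3 ≤ n) (hr : 3 ≤ r) (hrn : r ≤ n) (hp : p ∈ cells n r)
    (y : Fin (n - 1)) :
    (skipIdx (r - 1) y : Fin n).1 = colVal n p ↔ y = colIdx n r hn p := by
  have h1 := mem_cells hr hrn hp
  unfold colIdx
  rw [dif_pos (colNat_lt hr hrn hp), skip_val, Fin.ext_iff]
  have := y.2
  simp only
  have hc : colVal n p ≠ r - 1 := by
    unfold colVal; split_ifs <;> omega
  unfold colNat
  generalize colVal n p = c at *
  split_ifs <;> constructor <;> intro h <;> omega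

lemma skip_ne {n r p : ℕ} (hr : 3 ≤ r) (hrn : r ≤ n) (hp : p < 2 * (n - 1))
    (hp' : p ∉ cells n r) (y : Fin (n - 1)) :
    (skipIdx (r - 1) y : Fin n).1 ≠ colVal n p := by
  simp only [cells, mem_union, mem_range, mem_Ico] at hp'
  rw [skip_val]
  have := y.2
  unfold colVal
  split_ifs <;> omega

lemma entry_eq {n r : ℕ} (hn : 3 ≤ n) (x y : Fin (n - 1)) :
    delRC (Jmat n - 1 - Pmat n) 0 (r - 1) x y =
      (1 + if (skipIdx (r - 1) y : Fin n).1 = colVal n (2 * x.1) then -1 else 0) *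
      (1 + if (skipIdx (r - 1) y : Fin n).1 = colVal n (2 * x.1 + 1) then -1 else 0) := by
  have hx := x.2
  have e0 : (skipIdx 0 x : Fin n).1 = x.1 + 1 := by rw [skip_val]; simp
  have e1 : colVal n (2 * x.1) = x.1 + 1 := by
    unfold colVal; split_ifs <;> omega
  have e2 : colVal n (2 * x.1 + 1) = (x.1 + 1 + 1) % n := by
    unfold colVal
    split_ifs with h
    · rw [show x.1 + 1 + 1 = n by omega, Nat.mod_self]
    · rw [Nat.mod_eq_of_lt (by omega)]; omega
  have e3 : x.1 + 1 ≠ (x.1 + 1 + 1) % n := by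
    rw [← e2]; unfold colVal; split_ifs <;> omega
  have e4 : delRC (Jmat n - 1 - Pmat n) 0 (r - 1) x y =
     1 - (if x.1 + 1 = (skipIdx (r - 1) y : Fin n).1 then 1 else 0)
       - (if (skipIdx (r - 1) y : Fin n).1 = (x.1 + 1 + 1) % n then 1 else 0) := by
    simp only [delRC, Jmat, Pmat, Matrix.of_apply, Matrix.sub_apply, Matrix.one_apply, Fin.ext_iff, e0]
  rw [e4, e1, e2]
  generalize (skipIdx (r - 1) y : Fin n).1 = c at *
  by_cases h1 : c = x.1 + 1
  · subst h1
    simp [e3]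
  · have h1' : ¬ x.1 + 1 = c := fun h => h1 h.symm
    simp only [h1, h1', if_false]
    split_ifs <;> norm_num

lemma prod_range_pair (m : ℕ) (g : ℕ → ℤ) :
    ∏ x ∈ range m, g (2 * x) * g (2 * x + 1) = ∏ p ∈ range (2 * m), g p := by
  induction m with
  | zero => simp
  | succ m ih =>
    rw [Finset.prod_range_succ, ih, show 2 * (m + 1) = 2 * m + 1 + 1 by ring,
      Finset.prod_range_succ, Finset.prod_range_succ, mul_assoc]

lemma prod_entries {n r : ℕ} (hn : 3 ≤ n) (hr : 3 ≤ r) (hrn : r ≤ n)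
    (σ : Equiv.Perm (Fin (n - 1))) :
    ∏ x, delRC (Jmat n - 1 - Pmat n) 0 (r - 1) x (σ x) =
      ∏ p ∈ cells n r, (1 + if σ (rowIdx n hn p) = colIdx n r hn p then (-1 : ℤ) else 0) := by
  let g : ℕ → ℤ := fun p =>
    1 + if (skipIdx (r - 1) (σ (rowIdx n hn p)) : Fin n).1 = colVal n p then (-1 : ℤ) else 0
  have h1 : ∀ x : Fin (n - 1), delRC (Jmat n - 1 - Pmat n) 0 (r - 1) x (σ x) =
      g (2 * x.1) * g (2 * x.1 + 1) := by
    intro x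
    have hx := x.2
    have a1 : rowIdx n hn (2 * x.1) = x := by
      unfold rowIdx; rw [dif_pos (by omega)]; ext; simp
    have a2 : rowIdx n hn (2 * x.1 + 1) = x := by
      unfold rowIdx; rw [dif_pos (by omega)]; ext; simp only; omega
    rw [entry_eq hn]
    simp only [g, a1, a2]
  rw [Finset.prod_congr rfl (fun x _ => h1 x),
    Fin.prod_univ_eq_prod_range (fun x => g (2 * x) * g (2 * x + 1)) (n - 1), prod_range_pair]
  have hsub : cells n r ⊆ range (2 * (n - 1)) := fun p hp =>
    mem_range.2 (mem_cells hr hrn hp).1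
  rw [← Finset.prod_subset hsub]
  · apply Finset.prod_congr rfl
    intro p hp
    simp only [g, skip_eq_iff hn hr hrn hp]
  · intro p hp hp'
    simp only [g]
    rw [if_neg (skip_ne hr hrn (mem_range.1 hp) hp' _), add_zero]

lemma permanent_eq_spSum {n r : ℕ} (hn : 3 ≤ n) (hr : 3 ≤ r) (hrn : r ≤ n) :
    (delRC (Jmat n - 1 - Pmat n) 0 (r - 1)).permanent =
      spSum (cells n r) (fun k => (-1 : ℤ) ^ k * (Nat.factorial (n - k - 1) : ℤ)) := by
  classical
  rw [← Matrix.permanent_transpose]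
  unfold Matrix.permanent
  simp only [Matrix.transpose_apply, prod_entries hn hr hrn, Finset.prod_one_add]
  rw [Finset.sum_comm]
  unfold spSum
  apply Finset.sum_congr rfl
  intro S hS
  rw [mem_powerset] at hS
  have h1 : ∀ σ : Equiv.Perm (Fin (n - 1)),
      (∏ p ∈ S, if σ (rowIdx n hn p) = colIdx n r hn p then (-1 : ℤ) else 0) =
      if ∀ p ∈ S, σ (rowIdx n hn p) = colIdx n r hn p then (-1 : ℤ) ^ S.card else 0 := by
    intro σ
    rw [Finset.prod_ite_zero, Finset.prod_const]
  rw [Finset.sum_congr rfl (fun σ _ => h1 σ), ← Finset.sum_filter, Finset.sum_const, nsmul_eq_mul]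
  split_ifs with hsp
  · rw [card_perm_prescribed, Fintype.card_fin, mul_comm]
    · rw [show n - 1 - S.card = n - S.card - 1 by omega]
    · intro p hp q hq h
      have h' := (rowIdx_eq hn hr hrn (hS hp) (hS hq)).1 h
      by_contra hne
      rcases Nat.lt_or_gt_of_ne hne with hlt | hlt
      · exact hsp p hp (by rw [show p + 1 = q by omega]; exact hq)
      · exact hsp q hq (by rw [show q + 1 = p by omega]; exact hp)
    · intro p hp q hq h
      have h' := (colIdx_eq hn hr hrn (hS hp) (hS hq)).1 h
      by_contra hne
      rcases Nat.lt_or_gt_of_ne hne with hlt | hlt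
      · exact hsp p hp (by rw [show p + 1 = q by omega]; exact hq)
      · exact hsp q hq (by rw [show q + 1 = p by omega]; exact hp)
  · unfold Sparse at hsp
    push Not at hsp
    obtain ⟨p, hp, hp'⟩ := hsp
    rw [Finset.filter_false_of_mem]
    · simp
    · intro σ _ H
      have r1 := rowIdx_eq hn hr hrn (hS hp) (hS hp')
      have c1 := colIdx_eq hn hr hrn (hS hp) (hS hp')
      have : rowIdx n hn p = rowIdx n hn (p + 1) ↔ colIdx n r hn p = colIdx n r hn (p + 1) := by
        rw [← H p hp, ← H (p + 1) hp', σ.injective.eq_iff]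
      rw [r1, c1] at this
      omega

lemma intChoose_eq_s10 (a b : ℤ) (x y : ℕ) (ha : a = x) (hb : b = y) :
    intChoose a b = (x.choose y : ℤ) := by
  subst ha hb
  unfold intChoose
  split_ifs with h
  · simp
  · rw [Nat.choose_eq_zero_of_lt (by omega)]; simp

/-- **Solution of the seated-husband ménage problem (circular table).**  For `3 ≤ r ≤ n`,
`per((J_n - I - P)[1|r]) = ∑_{k=0}^{n-1} (-1)^k (n-k-1)!
  ∑_{i=max(r+k-n-1,0)}^{min(k,r-2)} C(2r-i-4, i) · C(2(n-r)-k+i+2, k-i)`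
(with `C(a,b) = 0` unless `0 ≤ b ≤ a`). -/
theorem seated_menage_formula (n r : ℕ) (hn : 3 ≤ n) (hr : 3 ≤ r) (hrn : r ≤ n) :
    (delRC (Jmat n - 1 - Pmat n) 0 (r - 1)).permanent =
      ∑ k ∈ Finset.range n,
        (-1 : ℤ) ^ k * (Nat.factorial (n - k - 1) : ℤ) *
          ∑ i ∈ Finset.Icc (r + k - n - 1) (min k (r - 2)),
            intChoose (2 * (r : ℤ) - (i : ℤ) - 4) (i : ℤ) *
              intChoose (2 * ((n : ℤ) - (r : ℤ)) - (k : ℤ) + (i : ℤ) + 2)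
                ((k : ℤ) - (i : ℤ)) := by
  rw [permanent_eq_spSum hn hr hrn, cells, spSum_two, Finset.sum_comm]
  have hL : ∀ i ∈ range (2 * r - 5 + 1), i ∉ range (r - 1) →
      ∑ j ∈ range (2 * (n - r) + 1 + 1), ((2 * (n - r) + 1 + 1 - j).choose j : ℤ) *
        (((2 * r - 5 + 1 - i).choose i : ℤ) *
          ((-1 : ℤ) ^ (i + j) * (Nat.factorial (n - (i + j) - 1) : ℤ))) = 0 := by
    intro i _ hi
    rw [mem_range] at hi
    rw [Nat.choose_eq_zero_of_lt (show 2 * r - 5 + 1 - i < i by omega)]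
    simp
  rw [← Finset.sum_subset (show range (r - 1) ⊆ range (2 * r - 5 + 1) from
    Finset.range_subset_range.2 (by omega)) hL]
  have hR : ∀ i ∈ range (r - 1),
      ∑ j ∈ range (2 * (n - r) + 1 + 1), ((2 * (n - r) + 1 + 1 - j).choose j : ℤ) *
        (((2 * r - 5 + 1 - i).choose i : ℤ) *
          ((-1 : ℤ) ^ (i + j) * (Nat.factorial (n - (i + j) - 1) : ℤ))) =
      ∑ j ∈ range (n - r + 2), ((2 * (n - r) + 1 + 1 - j).choose j : ℤ) *
        (((2 * r - 5 + 1 - i).choose i : ℤ) *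
          ((-1 : ℤ) ^ (i + j) * (Nat.factorial (n - (i + j) - 1) : ℤ))) := by
    intro i _
    symm
    apply Finset.sum_subset (Finset.range_subset_range.2 (by omega))
    intro j _ hj
    rw [mem_range] at hj
    rw [Nat.choose_eq_zero_of_lt (show 2 * (n - r) + 1 + 1 - j < j by omega)]
    simp
  rw [Finset.sum_congr rfl hR]
  simp only [Finset.mul_sum]
  rw [Finset.sum_sigma', Finset.sum_sigma']
  apply Finset.sum_bij' (fun (x : (_ : ℕ) × ℕ) _ => (⟨x.1 + x.2, x.1⟩ : (_ : ℕ) × ℕ))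
    (fun (x : (_ : ℕ) × ℕ) _ => (⟨x.2, x.1 - x.2⟩ : (_ : ℕ) × ℕ))
  · rintro ⟨i, j⟩ h
    simp only [mem_sigma, mem_range, mem_Icc] at h ⊢
    omega
  · rintro ⟨k, i⟩ h
    simp only [mem_sigma, mem_range, mem_Icc] at h ⊢
    omega
  · rintro ⟨i, j⟩ h
    simp
  · rintro ⟨k, i⟩ h
    simp only [mem_sigma, mem_range, mem_Icc] at h
    simp only [Sigma.mk.injEq, heq_eq_eq, and_true]
    omega
  · rintro ⟨i, j⟩ h
    simp only [mem_sigma, mem_range] at h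
    simp only
    have c1 : intChoose (2 * (r : ℤ) - (i : ℤ) - 4) (i : ℤ) = ((2 * r - 5 + 1 - i).choose i : ℤ) := by
      rw [intChoose_eq_s10 _ _ (2 * r - 5 + 1 - i) i (by omega) rfl]
    have c2 : intChoose (2 * ((n : ℤ) - (r : ℤ)) - ((i + j : ℕ) : ℤ) + (i : ℤ) + 2)
        (((i + j : ℕ) : ℤ) - (i : ℤ)) = ((2 * (n - r) + 1 + 1 - j).choose j : ℤ) := by
      rw [intChoose_eq_s10 _ _ (2 * (n - r) + 1 + 1 - j) j (by omega) (by omega)]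
    rw [c1, c2]
    ring
end

section
/- For every integer n ≥ 3, per((J_n − I − P)[1|3]) = Σ_{k=0}^{n−3} (−1)^k · C(2n−k−4, k) · (n−k−2)! · (n−k−2). -/
open Finset

/-- Permanent of the `m × m` matrix with entries `f i j`. -/
def pf (m : ℕ) (f : ℕ → ℕ → ℤ) : ℤ :=
  (Matrix.of fun (i j : Fin m) => f i j).permanent

theorem pf_congr (m : ℕ) (f g : ℕ → ℕ → ℤ) (h : ∀ i < m, ∀ j < m, f i j = g i j) :
    pf m f = pf m g := by
  unfold pf
  congr 1
  ext i j
  exact h i i.2 j j.2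

theorem pf_transpose (m : ℕ) (f : ℕ → ℕ → ℤ) : pf m f = pf m (fun i j => f j i) := by
  unfold pf
  rw [← Matrix.permanent_transpose]
  rfl

theorem pf_rot_right (m : ℕ) (f : ℕ → ℕ → ℤ) :
    pf (m + 1) f = pf (m + 1) (fun i j => f i (if j = m then 0 else j + 1)) := by
  unfold pf
  rw [← Matrix.permanent_permute_rows (finRotate (m + 1))]
  congr 1
  ext i j
  simp only [Matrix.submatrix_apply, Matrix.of_apply, id]
  rw [coe_finRotate]
  simp only [Fin.ext_iff, Fin.val_last]

theorem pf_rot_left (m : ℕ) (f : ℕ → ℕ → ℤ) :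
    pf (m + 1) f = pf (m + 1) (fun i j => f (if i = m then 0 else i + 1) j) := by
  rw [pf_transpose, pf_rot_right, pf_transpose]

/-- Changing the `(0,0)` entry from `1` to `0` subtracts the minor. -/
theorem pf_expand (m : ℕ) (f g : ℕ → ℕ → ℤ) (h : ∀ i j, i + j ≠ 0 → f i j = g i j)
    (hf : f 0 0 = 0) (hg : g 0 0 = 1) :
    pf (m + 1) f = pf (m + 1) g - pf m (fun i j => f (i + 1) (j + 1)) := by
  unfold pf Matrix.permanent
  rw [eq_sub_iff_add_eq]
  simp only [← Equiv.Perm.decomposeFin.symm.sum_comp, Fintype.sum_prod_type, Fin.sum_univ_succ,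
    Fin.prod_univ_succ, Equiv.Perm.decomposeFin_symm_apply_zero,
    Equiv.Perm.decomposeFin_symm_apply_succ, Matrix.of_apply, Equiv.swap_self, Equiv.refl_apply,
    Fin.val_zero, Fin.val_succ, hf, hg, zero_mul, one_mul, Finset.sum_const_zero, zero_add]
  rw [add_comm]
  congr 1
  · refine Finset.sum_congr rfl fun σ _ => Finset.prod_congr rfl fun i _ => ?_
    exact h _ _ (by omega)
  · refine Finset.sum_congr rfl fun a _ => Finset.sum_congr rfl fun σ _ => ?_
    rw [h _ _ (by omega)]
    congr 1
    refine Finset.prod_congr rfl fun i _ => ?_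
    exact h _ _ (by omega)

/-- The complement of the first `l` cells of the staircase. -/
def stair (l i j : ℕ) : ℤ := if (j = i ∨ j = i + 1) ∧ i + j < l then 0 else 1

theorem pf_stair_zero (m : ℕ) : pf m (stair 0) = (m.factorial : ℤ) := by
  simp [pf, stair, Matrix.permanent, Fintype.card_perm]

theorem pf_stair_succ (m l : ℕ) (hl : l ≤ 2 * m) :
    pf (m + 1) (stair (l + 1)) = pf (m + 1) (stair l) - pf m (stair (l - 1)) := by
  rw [pf_expand m (stair (l + 1)) (fun i j => if i + j = 0 then 1 else stair (l + 1) i j)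
    (by intro i j h; beta_reduce; rw [if_neg h]) (by simp [stair]) (by simp)]
  congr 1
  · refine (pf_rot_right _ _).trans ((pf_transpose _ _).trans (pf_congr _ _ _ ?_))
    intro i hi j hj
    beta_reduce
    unfold stair
    grind
  · apply pf_congr
    intro i hi j hj
    unfold stair
    grind

theorem choose_step (l k : ℕ) :
    (l + 2 - (k + 1)).choose (k + 1) =
      (l + 1 - (k + 1)).choose (k + 1) + (l - 1 + 1 - k).choose k := by
  rcases Nat.lt_or_ge k (l + 1) with h | h
  · rcases Nat.eq_zero_or_pos l with rfl | hl
    · obtain rfl : k = 0 := by omega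
      simp
    · have e1 : l + 2 - (k + 1) = (l - k) + 1 := by omega
      have e2 : l + 1 - (k + 1) = l - k := by omega
      have e3 : l - 1 + 1 - k = l - k := by omega
      rw [e1, e2, e3, Nat.choose_succ_succ, Nat.succ_eq_add_one, add_comm]
  · rw [Nat.choose_eq_zero_of_lt (by omega), Nat.choose_eq_zero_of_lt (by omega),
      Nat.choose_eq_zero_of_lt (by omega)]

theorem pf_stair (l : ℕ) : ∀ m : ℕ, l ≤ 2 * m - 1 → pf m (stair l) =
    ∑ k ∈ Finset.range (m + 1), (-1 : ℤ) ^ k * ((l + 1 - k).choose k : ℤ) *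
      ((m - k).factorial : ℤ) := by
  induction l using Nat.strong_induction_on with
  | _ l ih =>
  intro m hm
  rcases l with _ | l
  · rw [pf_stair_zero, Finset.sum_range_succ', Finset.sum_eq_zero]
    · simp
    · intro k _
      rw [Nat.choose_eq_zero_of_lt (by omega)]
      simp
  · obtain ⟨m, rfl⟩ : ∃ m', m = m' + 1 := ⟨m - 1, by omega⟩
    rw [pf_stair_succ m l (by omega), ih l (by omega) (m + 1) (by omega),
      ih (l - 1) (by omega) m (by omega), Finset.sum_range_succ' _ (m + 1),
      Finset.sum_range_succ' _ (m + 1), add_sub_right_comm, ← Finset.sum_sub_distrib]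
    congr 1
    · refine Finset.sum_congr rfl fun k _ => ?_
      rw [choose_step l k, Nat.add_sub_add_right]
      push_cast
      ring

/-- For every `n ≥ 3`,
`per((J_n - I - P)[1|3]) = ∑_{k=0}^{n-3} (-1)^k · C(2n-k-4, k) · (n-k-2)! · (n-k-2)`. -/
theorem permanent_minor_r3 (n : ℕ) (hn : 3 ≤ n) :
    (delRC (Jmat n - 1 - Pmat n) 0 2).permanent =
      ∑ k ∈ Finset.range (n - 2),
        (-1 : ℤ) ^ k * (Nat.choose (2 * n - k - 4) k : ℤ) *
          (Nat.factorial (n - k - 2) : ℤ) * ((n - k - 2 : ℕ) : ℤ) := by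
  obtain ⟨m, rfl⟩ : ∃ m, n = m + 3 := ⟨n - 3, by omega⟩
  set D : ℕ → ℕ → ℤ := fun i j =>
    if (j = i ∧ 2 ≤ i) ∨ (j = i + 1 ∧ j ≤ m + 1) ∨ (i = m + 1 ∧ j = 0) then 0 else 1 with hD
  have h1 : (delRC (Jmat (m + 3) - 1 - Pmat (m + 3)) 0 2).permanent = pf (m + 2) D := by
    unfold pf
    congr 1
    ext i j
    have hi : i.1 < m + 2 := i.2
    have hj : j.1 < m + 2 := j.2
    have hmod : (i.1 + 1 + 1) % (m + 3) = if i.1 = m + 1 then 0 else i.1 + 2 := by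
      split_ifs with h
      · rw [h]; simp
      · exact Nat.mod_eq_of_lt (by omega)
    simp only [delRC, Matrix.of_apply, Matrix.sub_apply, Jmat, Pmat, Matrix.one_apply, hD,
      skipIdx, not_lt_zero, if_false, hmod, Fin.ext_iff]
    clear hmod
    split_ifs <;> first | rfl | (exfalso; simp only [] at * <;> omega)
  have h2 : pf (m + 2) D = pf (m + 2) (stair (2 * m + 1)) - pf (m + 1) (stair (2 * m + 1)) := by
    refine (pf_rot_right _ _).trans ((pf_transpose _ _).trans ?_)
    rw [pf_congr (m + 2) _ (fun i j => if (j = i ∨ (j = i + 1 ∧ 1 ≤ i)) then 0 else 1)]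
    · rw [pf_expand (m + 1) _
        (fun i j => if (j = i ∨ (j = i + 1 ∧ 1 ≤ i)) ∧ i + j ≠ 0 then 0 else 1)
        (by intro i j h; simp only [h, ne_eq, not_false_eq_true, and_true]) (by simp) (by simp)]
      congr 1
      · refine (pf_rot_right _ _).trans ((pf_rot_left _ _).trans (pf_congr _ _ _ ?_))
        intro i hi j hj
        unfold stair
        grind
      · apply pf_congr
        intro i hi j hj
        unfold stair
        grind
    · intro i hi j hj
      simp only [hD]
      grind
  rw [h1, h2, pf_stair _ _ (by omega), pf_stair _ _ (by omega), Finset.sum_range_succ _ (m + 2),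
    Nat.choose_eq_zero_of_lt (show 2 * m + 1 + 1 - (m + 2) < m + 2 by omega)]
  simp only [Nat.cast_zero, mul_zero, zero_mul, add_zero]
  rw [← Finset.sum_sub_distrib, Finset.sum_range_succ]
  have e : m + 3 - 2 = m + 1 := by omega
  rw [e]
  simp only [show m + 2 - (m + 1) = 1 by omega, Nat.sub_self, Nat.factorial_one,
    Nat.factorial_zero, sub_self, add_zero]
  refine Finset.sum_congr rfl fun k hk => ?_
  have hk' := Finset.mem_range.1 hk
  rw [show 2 * (m + 3) - k - 4 = 2 * m + 1 + 1 - k by omega,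
    show m + 3 - k - 2 = m + 1 - k by omega, show m + 2 - k = (m + 1 - k) + 1 by omega,
    Nat.factorial_succ]
  push_cast
  ring
end

section
/- For n = 10, the values per((J_{10} − I − P)[1|r]) for 3 ≤ r ≤ 10 are not all equal; in particular, 8 · per((J_{10} − I − P)[1|3]) ≠ per(J_{10} − I − P). (Indeed per((J_{10} − I − P)[1|3]) = 54888 while per(J_{10} − I − P) = 439792 = 8 · 54974.) -/
open Finset

theorem ryser_aux {n : ℕ} (T : Finset (Fin n)) (hT : T ≠ univ) :
    ∑ S : Finset (Fin n), (if T ⊆ S then (-1 : ℤ) ^ (Sᶜ).card else 0) = 0 := by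
  rw [← Equiv.sum_comp (Function.Involutive.toPerm compl (compl_involutive (α := Finset (Fin n))))]
  simp only [Function.Involutive.coe_toPerm, compl_compl]
  rw [← Finset.sum_filter]
  have h : (univ.filter fun S : Finset (Fin n) => T ⊆ Sᶜ) = (Tᶜ).powerset := by
    ext S
    simp only [mem_filter, mem_univ, true_and, mem_powerset]
    exact le_compl_comm
  rw [h, Finset.sum_powerset_neg_one_pow_card]
  simp [hT]

theorem ryser {n : ℕ} (M : Matrix (Fin n) (Fin n) ℤ) :
    M.permanent = ∑ S : Finset (Fin n), (-1 : ℤ) ^ (Sᶜ).card * ∏ i, ∑ j ∈ S, M j i := by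
  have h1 : ∀ S : Finset (Fin n), (-1 : ℤ) ^ (Sᶜ).card * ∏ i, ∑ j ∈ S, M j i =
      ∑ f : Fin n → Fin n, (∏ i, M (f i) i) *
        (if univ.image f ⊆ S then (-1 : ℤ) ^ (Sᶜ).card else 0) := by
    intro S
    rw [Finset.prod_univ_sum, Finset.mul_sum]
    simp only [mul_ite, mul_zero]
    rw [← Finset.sum_filter]
    refine Finset.sum_congr ?_ fun _ _ => mul_comm _ _
    ext f
    simp [Fintype.mem_piFinset, Finset.image_subset_iff]
  rw [Finset.sum_congr rfl fun S _ => h1 S, Finset.sum_comm]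
  simp only [← Finset.mul_sum]
  have h2 : ∀ f : Fin n → Fin n, (∏ i, M (f i) i) *
      (∑ S : Finset (Fin n), if univ.image f ⊆ S then (-1 : ℤ) ^ (Sᶜ).card else 0) =
      if Function.Bijective f then ∏ i, M (f i) i else 0 := by
    intro f
    split_ifs with hf
    · have : univ.image f = univ := Finset.image_univ_of_surjective hf.2
      rw [this]
      simp [Finset.univ_subset_iff]
    · rw [ryser_aux, mul_zero]
      intro h
      apply hf
      have hs : Function.Surjective f := by
        intro y
        have : y ∈ univ.image f := by rw [h]; exact mem_univ y
        simpa using this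
      exact Finite.surjective_iff_bijective.mp hs
  rw [Finset.sum_congr rfl fun f _ => h2 f, ← Finset.sum_filter]
  unfold Matrix.permanent
  refine Finset.sum_bij (fun σ _ => (σ : Fin n → Fin n)) ?_ ?_ ?_ ?_
  · intro σ _
    exact mem_filter.mpr ⟨mem_univ _, σ.bijective⟩
  · intro a _ b _ h
    exact Equiv.coe_fn_injective h
  · intro f hf
    exact ⟨Equiv.ofBijective f (by simpa using hf), mem_univ _, rfl⟩
  · intro σ _
    rfl

theorem per_ten : (Jmat 10 - 1 - Pmat 10).permanent = 439792 := by
  rw [ryser]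
  decide +kernel

theorem per_three : (delRC (Jmat 10 - 1 - Pmat 10) 0 2).permanent = 54888 := by
  rw [ryser]
  decide +kernel

theorem per_four : (delRC (Jmat 10 - 1 - Pmat 10) 0 3).permanent = 55000 := by
  rw [ryser]
  decide +kernel

/-- For `n = 10` the minors `per((J_10 - I - P)[1|r])`, `3 ≤ r ≤ 10`, are not all equal;
in particular `8 · per((J_10 - I - P)[1|3]) ≠ per(J_10 - I - P)`.  Indeed
`per((J_10 - I - P)[1|3]) = 54888` while `per(J_10 - I - P) = 439792 = 8 · 54974`. -/
theorem counterexample_n10 :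
    (delRC (Jmat 10 - 1 - Pmat 10) 0 2).permanent = 54888 ∧
    (Jmat 10 - 1 - Pmat 10).permanent = 439792 ∧
    ¬ (∀ r s : ℕ, 3 ≤ r → r ≤ 10 → 3 ≤ s → s ≤ 10 →
        (delRC (Jmat 10 - 1 - Pmat 10) 0 (r - 1)).permanent =
          (delRC (Jmat 10 - 1 - Pmat 10) 0 (s - 1)).permanent) ∧
    8 * (delRC (Jmat 10 - 1 - Pmat 10) 0 2).permanent ≠
      (Jmat 10 - 1 - Pmat 10).permanent := by
  refine ⟨per_three, per_ten, fun h => ?_, ?_⟩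
  · have h34 := h 3 4 (by norm_num) (by norm_num) (by norm_num) (by norm_num)
    norm_num only [per_three, per_four] at h34
  · rw [per_three, per_ten]
    norm_num
end
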